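/- Let condition B hold, let v_ε → ∞ as ε → 0, and define κ̃_ε(t) = Σ_{i∈X} Σ_{n=1}^{[tπ_{ε,i}v_ε]} κ_{ε,i,n}, t ≥ 0. Then condition D₁ holds if and only if κ̃_ε(1) converges in distribution as ε → 0 to a nonnegative random variable θ₀ whose distribution is not concentrated at zero; in this case E e^{−sθ₀} = e^{−A(s)} for s ≥ 0, and moreover, for any 0 = t₀ ≤ t₁ ≤ … ≤ t_n < ∞ and s₁, …, s_n ≥ 0, E exp{−Σ_{r=1}^n s_r (κ̃_ε(t_r) − κ̃_ε(t_{r−1}))} → exp{−Σ_{r=1}^n A(s_r)(t_r − t_{r−1})} as ε → 0. -/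

import Mathlib

open MeasureTheory Filter Set
open scoped Topology ENNReal

noncomputable section

/-- Condition B: there exists a ring chain of states `c 0, c 1, …, c N = c 0`
containing all states of the phase space, with
`liminf_{ε→0+} p ε (c (k-1)) (c k) > 0` for `k = 1, …, N`. -/
def CondB {m : ℕ} (p : ℝ → Fin m → Fin m → ℝ) : Prop :=
  ∃ N : ℕ, 0 < N ∧ ∃ c : ℕ → Fin m, c N = c 0 ∧
    (∀ i : Fin m, ∃ k ≤ N, c k = i) ∧
    ∀ k < N, 0 < Filter.liminf (fun ε => p ε (c k) (c (k + 1))) (𝓝[>] (0 : ℝ))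

/-- `π` is a stationary distribution of the transition matrix `p`. -/
def IsStationaryDist {m : ℕ} (p : Fin m → Fin m → ℝ) (π : Fin m → ℝ) : Prop :=
  (∀ i, 0 ≤ π i) ∧ (∑ i, π i = 1) ∧ ∀ j, π j = ∑ i, π i * p i j

/-- `φ_ε(s) = Σ_i π_{ε,i} E_i e^{−sκ_{ε,1}}`, the stationary average of the Laplace
transforms of the sojourn times. -/
def lapPhi {m : ℕ} {Ω : Type} [MeasurableSpace Ω]
    (Pstart : ℝ → Fin m → Measure Ω) (κ : ℝ → ℕ → Ω → ℝ) (π : ℝ → Fin m → ℝ)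
    (ε s : ℝ) : ℝ :=
  ∑ i, π ε i * ∫ ω, Real.exp (-(s * κ ε 1 ω)) ∂(Pstart ε i)

/-- `hitTimes e i n` is the `(n+1)`-th hitting time `τ_{i,n+1}` of state `i` by the
trajectory `e`. -/
def hitTimes {m : ℕ} (e : ℕ → Fin m) (i : Fin m) : ℕ → ℕ
  | 0 => sInf {k | e k = i}
  | n + 1 => sInf {k | hitTimes e i n < k ∧ e k = i}

/-- `kHit η κ i n ω = κ_{ε,i,n+1} = κ_{ε, τ_{ε,i,n+1} + 1}`, the sojourn time attached to
the `(n+1)`-th visit of the embedded chain to state `i`. -/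
def kHit {m : ℕ} {Ω : Type} (η : ℕ → Ω → Fin m) (κ : ℕ → Ω → ℝ)
    (i : Fin m) (n : ℕ) (ω : Ω) : ℝ :=
  κ (hitTimes (fun k => η k ω) i n + 1) ω

/-- The process `κ̃_ε(t) = Σ_{i∈X} Σ_{n=1}^{[t π_{ε,i} v_ε]} κ_{ε,i,n}`. -/
def kTil {m : ℕ} {Ω : Type} (η : ℝ → ℕ → Ω → Fin m) (κ : ℝ → ℕ → Ω → ℝ)
    (π : ℝ → Fin m → ℝ) (v : ℝ → ℝ) (ε t : ℝ) (ω : Ω) : ℝ :=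
  ∑ i : Fin m, ∑ n ∈ Finset.range (Nat.floor (t * (π ε i * v ε))), kHit (η ε) (κ ε) i n ω

/-!
Play a game along the embedded chain: at the `n`-th visit to state `i` multiply the capital by
`exp (-s i n * κ) / φ_i (s i n)`, where `κ` is the sojourn time that follows and `φ_i` its Laplace
transform. The capital has constant mean at every fixed time. Because the chain is recurrent, every
prescribed visit is eventually made, and in the limit the sojourn times at successive visits behave
as independent variables; hence the Laplace transform of the increments of `κ̃_ε` is a finite
product of powers of the `φ_i`. Recurrence is itself obtained from such a game, in which `κ` plays
no role.

The exponents `π_i v_ε` tend to infinity because Condition B bounds the stationary distribution from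
below, so `1 - x ≤ -log x ≤ (1 - x) / x` turns convergence of the products into convergence of
`∑ i, π_i v_ε (1 - φ_i) = v_ε (1 - φ_ε)`. Laplace limits are Laplace transforms by weak compactness
of the laws of `exp (-X)` on `[0, 1]`.
-/

open ProbabilityTheory (mgf mgf_id_map)

section BigOperators

variable {M : Type*} [CommMonoid M]

@[to_additive sum_Icc_one_eq_sum_range]
lemma prod_Icc_one_eq_prod_range (f : ℕ → M) (n : ℕ) :
    ∏ r ∈ Finset.Icc 1 n, f r = ∏ r ∈ Finset.range n, f (r + 1) := by
  rw [Finset.range_eq_Ico, Finset.prod_Ico_add' f 0 n 1]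
  rfl

@[to_additive]
lemma prod_range_eq_prod_prod_Ico (f : ℕ → M) {a : ℕ → ℕ} (ha : a 0 = 0) {R : ℕ}
    (hmono : ∀ r < R, a r ≤ a (r + 1)) :
    ∏ n ∈ Finset.range (a R), f n =
      ∏ r ∈ Finset.range R, ∏ n ∈ Finset.Ico (a r) (a (r + 1)), f n := by
  induction R with
  | zero => simp only [ha, Finset.range_zero, Finset.prod_empty]
  | succ R ih =>
    rw [Finset.prod_range_succ, ← ih fun r hr => hmono r (hr.trans R.lt_succ_self),
      Finset.prod_range_mul_prod_Ico f (hmono R R.lt_succ_self)]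

lemma ofReal_prod_range_of_antitone {q : ℕ → ℝ}
    (hq : Antitone fun n => ENNReal.ofReal (∏ k ∈ Finset.range n, q k)) (n : ℕ) :
    ENNReal.ofReal (∏ k ∈ Finset.range n, q k) =
      ∏ k ∈ Finset.range n, ENNReal.ofReal (q k) := by
  induction n with
  | zero => simp only [Finset.range_zero, Finset.prod_empty, ENNReal.ofReal_one]
  | succ n ih =>
    rw [Finset.prod_range_succ fun k => ENNReal.ofReal (q k), ← ih]
    rcases le_total 0 (∏ k ∈ Finset.range n, q k) with h | h
    · rw [Finset.prod_range_succ, ENNReal.ofReal_mul h]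
    · rw [ENNReal.ofReal_of_nonpos h, zero_mul, ← nonpos_iff_eq_zero]
      exact (hq n.le_succ).trans_eq (ENNReal.ofReal_of_nonpos h)

end BigOperators

section Measurability

variable {Ω : Type*} [MeasurableSpace Ω]

lemma measurable_sInf_nat {p : ℕ → Ω → Prop} (hp : ∀ k, MeasurableSet {ω | p k ω}) :
    Measurable fun ω => sInf {k | p k ω} := by
  classical
  have hex : MeasurableSet {ω | ∃ k, p k ω} := by
    simpa only [ofPred_exists] using MeasurableSet.iUnion hp
  have hfind : Measurable fun ω : {ω | ∃ k, p k ω} => Nat.find ω.2 :=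
    measurable_find _ fun k => measurable_subtype_coe (hp k)
  refine measurable_of_restrict_of_restrict_compl hex ?_ ?_
  · convert hfind using 2 with ω
    exact Nat.sInf_def ω.2
  · convert measurable_const (a := 0) using 2 with ω
    exact Nat.sInf_eq_zero.2 (.inr (eq_empty_of_forall_notMem fun k hk => ω.2 ⟨k, hk⟩))

lemma lintegral_eq_sum_setLIntegral_eq {α : Type*} [Fintype α] [MeasurableSpace α]
    [MeasurableSingletonClass α] (μ : Measure Ω) {f : Ω → α} (hf : Measurable f)
    (F : Ω → ℝ≥0∞) : ∫⁻ ω, F ω ∂μ = ∑ a, ∫⁻ ω in {ω | f ω = a}, F ω ∂μ := by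
  have hcover : ⋃ a, {ω | f ω = a} = univ := iUnion_eq_univ_iff.2 fun ω => ⟨f ω, rfl⟩
  have hmeas (a : α) : MeasurableSet {ω | f ω = a} := hf (measurableSet_singleton a)
  have hdisj : Pairwise (Function.onFun Disjoint fun a => {ω | f ω = a}) :=
    fun a b hab => disjoint_left.2 fun ω ha hb => hab (ha.symm.trans hb)
  rw [← setLIntegral_univ, ← hcover,
    lintegral_iUnion hmeas hdisj, tsum_fintype]

lemma lintegral_pi_prod {n : ℕ} {E : Fin n → Type*} [∀ i, MeasurableSpace (E i)]
    (μ : ∀ i, Measure (E i)) [∀ i, SigmaFinite (μ i)]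
    {f : ∀ i, E i → ℝ≥0∞} (hf : ∀ i, Measurable (f i)) :
    ∫⁻ x, ∏ i, f i (x i) ∂Measure.pi μ = ∏ i, ∫⁻ x, f i x ∂μ i := by
  induction n with
  | zero => simp
  | succ n ih =>
    have htail : Measurable fun x : ∀ i : Fin n, E i.succ => ∏ i, f i.succ (x i) :=
      Finset.measurable_fun_prod _ fun i _ => (hf i.succ).comp (measurable_pi_apply i)
    rw [← (measurePreserving_piFinSuccAbove μ 0).symm.lintegral_comp (by fun_prop),
      Fin.prod_univ_succ, ← ih (fun i => μ i.succ) fun i => hf i.succ,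
      ← lintegral_prod_mul (hf 0).aemeasurable htail.aemeasurable]
    simp only [Fin.prod_univ_succ]
    rfl

end Measurability

section LaplaceTransform

variable {Ω : Type*} [MeasurableSpace Ω] {μ : Measure Ω} {X : Ω → ℝ} {s : ℝ}

lemma exp_neg_mul_le_one {s x : ℝ} (hs : 0 ≤ s) (hx : 0 ≤ x) : Real.exp (-s * x) ≤ 1 :=
  Real.exp_le_one_iff.2 (mul_nonpos_of_nonpos_of_nonneg (neg_nonpos.2 hs) hx)

lemma norm_exp_le_one {x : ℝ} (hx : x ≤ 0) : ‖Real.exp x‖ ≤ 1 :=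
  (Real.norm_of_nonneg (Real.exp_pos x).le).trans_le (Real.exp_le_one_iff.2 hx)

lemma integrable_exp_neg_mul [IsFiniteMeasure μ] (hXm : AEMeasurable X μ) (hX : ∀ᵐ ω ∂μ, 0 ≤ X ω)
    (hs : 0 ≤ s) : Integrable (fun ω => Real.exp (-s * X ω)) μ :=
  .of_bound (hXm.const_mul (-s)).exp.aestronglyMeasurable 1 <| hX.mono fun _ hω =>
    norm_exp_le_one (mul_nonpos_of_nonpos_of_nonneg (neg_nonpos.2 hs) hω)

lemma mgf_neg_le_one [IsProbabilityMeasure μ] (hXm : AEMeasurable X μ) (hX : ∀ᵐ ω ∂μ, 0 ≤ X ω)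
    (hs : 0 ≤ s) : mgf X μ (-s) ≤ 1 :=
  (integral_mono_ae (integrable_exp_neg_mul hXm hX hs) (integrable_const 1)
    (hX.mono fun _ => exp_neg_mul_le_one hs)).trans_eq (by simp)

lemma mgf_neg_lt_one_iff [IsProbabilityMeasure μ] (hXm : AEMeasurable X μ)
    (hX : ∀ᵐ ω ∂μ, 0 ≤ X ω) (hs : 0 < s) : mgf X μ (-s) < 1 ↔ ¬ ∀ᵐ ω ∂μ, X ω = 0 := by
  have hone : ∫ _, (1 : ℝ) ∂μ = 1 := by simp
  rw [(mgf_neg_le_one hXm hX hs.le).lt_iff_ne, ne_eq, not_iff_not]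
  unfold mgf
  rw [← hone, integral_eq_iff_of_ae_le (integrable_exp_neg_mul hXm hX hs.le) (integrable_const 1)
    (hX.mono fun _ => exp_neg_mul_le_one hs.le)]
  refine eventually_congr (.of_forall fun ω => ?_)
  rw [Real.exp_eq_one_iff, mul_eq_zero, or_iff_right (neg_ne_zero.2 hs.ne')]

lemma tendsto_mgf_neg_one [IsProbabilityMeasure μ] (hXm : AEMeasurable X μ)
    (hX : ∀ᵐ ω ∂μ, 0 ≤ X ω) : Tendsto (fun s => mgf X μ (-s)) (𝓝[>] 0) (𝓝 1) := by
  have hlim (ω : Ω) : Tendsto (fun s => Real.exp (-s * X ω)) (𝓝[>] 0) (𝓝 1) := by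
    have hcont : Continuous fun s : ℝ => Real.exp (-s * X ω) := by fun_prop
    exact (hcont.tendsto' 0 1 (by simp)).mono_left nhdsWithin_le_nhds
  have hone : ∫ _, (1 : ℝ) ∂μ = 1 := by simp
  rw [← hone]
  refine tendsto_integral_filter_of_dominated_convergence (fun _ => 1)
    (.of_forall fun s => (hXm.const_mul (-s)).exp.aestronglyMeasurable) ?_
    (integrable_const 1) (.of_forall hlim)
  filter_upwards [self_mem_nhdsWithin] with s hs
  exact hX.mono fun ω hω =>
    norm_exp_le_one (mul_nonpos_of_nonpos_of_nonneg (neg_nonpos.2 (mem_Ioi.1 hs).le) hω)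

section ContinuityTheorem

variable {α : Type*} {l : Filter α} [l.NeBot] {L : ℝ → ℝ}

lemma exists_probabilityMeasure_eventually_eq {μ : α → Measure Ω}
    (hμ : ∀ᶠ a in l, IsProbabilityMeasure (μ a)) :
    ∃ ν : α → ProbabilityMeasure Ω, ∀ᶠ a in l, (ν a : Measure Ω) = μ a := by
  obtain ⟨a₀, h₀⟩ := hμ.exists
  have hν (a : α) :
      ∃ ν : ProbabilityMeasure Ω, IsProbabilityMeasure (μ a) → (ν : Measure Ω) = μ a := by
    by_cases h : IsProbabilityMeasure (μ a)
    · exact ⟨⟨μ a, h⟩, fun _ => rfl⟩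
    · exact ⟨⟨μ a₀, h₀⟩, fun h' => absurd h' h⟩
  choose ν hν using hν
  exact ⟨ν, hμ.mono hν⟩

lemma exists_probabilityMeasure_integral_rpow_eq {ρ : α → ProbabilityMeasure unitInterval}
    (hρ : ∀ s > 0, Tendsto (fun a => ∫ y, (y : ℝ) ^ s ∂(ρ a : Measure unitInterval)) l
      (𝓝 (L s))) :
    ∃ r : ProbabilityMeasure unitInterval,
      ∀ s > 0, ∫ y, (y : ℝ) ^ s ∂(r : Measure unitInterval) = L s := by
  obtain ⟨r, -, hr⟩ :=
    isCompact_univ.ultrafilter_le_nhds ((Ultrafilter.of l).map ρ) (by simp)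
  have hρr : Tendsto ρ (Ultrafilter.of l) (𝓝 r) := hr
  rw [ProbabilityMeasure.tendsto_iff_forall_integral_tendsto] at hρr
  refine ⟨r, fun s hs => ?_⟩
  have hcont : Continuous fun y : unitInterval => (y : ℝ) ^ s :=
    continuous_subtype_val.rpow_const fun _ => .inr (le_of_lt hs)
  exact tendsto_nhds_unique (hρr (.mkOfCompact ⟨_, hcont⟩))
    ((hρ s hs).mono_left (Ultrafilter.of_le l))

lemma ae_pos_of_tendsto_integral_rpow {r : Measure unitInterval} [IsProbabilityMeasure r]
    (hr : Tendsto (fun s : ℝ => ∫ y, (y : ℝ) ^ s ∂r) (𝓝[>] 0) (𝓝 1)) :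
    ∀ᵐ y : unitInterval ∂r, (0 : ℝ) < y := by
  have hmeas : MeasurableSet {y : unitInterval | (0 : ℝ) < y} :=
    measurableSet_lt measurable_const measurable_subtype_coe
  have hle : ∀ s ∈ Ioi (0 : ℝ), ∫ y, (y : ℝ) ^ s ∂r ≤ r.real {y | (0 : ℝ) < y} := by
    intro s hs
    rw [← integral_indicator_one hmeas]
    refine integral_mono_of_nonneg (.of_forall fun y => Real.rpow_nonneg y.2.1 s)
      ((integrable_const 1).indicator hmeas) (.of_forall fun y => ?_)
    rcases y.2.1.eq_or_lt with hy | hy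
    · simp only [← hy, Real.zero_rpow (ne_of_gt hs)]
      exact indicator_nonneg (fun _ _ => zero_le_one) y
    · exact (Real.rpow_le_one y.2.1 y.2.2 (le_of_lt hs)).trans_eq
        (indicator_of_mem (s := {y : unitInterval | (0 : ℝ) < y}) hy 1).symm
  have hone : 1 ≤ r.real {y | (0 : ℝ) < y} :=
    le_of_tendsto hr (eventually_nhdsWithin_of_forall hle)
  exact (mem_ae_iff_prob_eq_one hmeas).2 <| prob_le_one.antisymm <|
    (ENNReal.one_le_ofReal.2 hone).trans_eq (ofReal_measureReal)

/-- The substitution `y = exp (-x)` turns Laplace transforms into moments of laws on the compact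
interval `[0, 1]`; the limit `L s → 1` keeps mass from escaping to `x = ∞`, that is `y = 0`. -/
theorem exists_mgf_neg_eq_of_tendsto {μ : α → Measure Ω} {X : α → Ω → ℝ}
    (hμ : ∀ᶠ a in l, IsProbabilityMeasure (μ a)) (hXm : ∀ᶠ a in l, AEMeasurable (X a) (μ a))
    (hX : ∀ᶠ a in l, ∀ᵐ ω ∂μ a, 0 ≤ X a ω)
    (hlim : ∀ s > 0, Tendsto (fun a => mgf (X a) (μ a) (-s)) l (𝓝 (L s)))
    (hL : Tendsto L (𝓝[>] 0) (𝓝 1)) :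
    ∃ ν : Measure ℝ, IsProbabilityMeasure ν ∧ (∀ᵐ x ∂ν, 0 ≤ x) ∧
      ∀ s > 0, mgf id ν (-s) = L s := by
  let toI (x : ℝ) : unitInterval := projIcc 0 1 zero_le_one (Real.exp (-x))
  have htoI : Measurable toI := (continuous_projIcc.comp (by fun_prop)).measurable
  have htoI_rpow {x : ℝ} (hx : 0 ≤ x) (s : ℝ) : (toI x : ℝ) ^ s = Real.exp (-s * x) := by
    have hmem : Real.exp (-x) ∈ Icc 0 1 :=
      ⟨(Real.exp_pos _).le, Real.exp_le_one_iff.2 (neg_nonpos.2 hx)⟩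
    rw [show toI x = ⟨_, hmem⟩ from projIcc_of_mem zero_le_one hmem, ← Real.exp_mul, neg_mul_comm,
      mul_comm, neg_mul]
  obtain ⟨ρ, hρ⟩ := exists_probabilityMeasure_eventually_eq
    (μ := fun a => (μ a).map fun ω => toI (X a ω)) <| by
      filter_upwards [hμ, hXm] with a _ hXm
      exact Measure.isProbabilityMeasure_map (htoI.comp_aemeasurable hXm)
  obtain ⟨r, hr⟩ := exists_probabilityMeasure_integral_rpow_eq (ρ := ρ) fun s hs => by
    refine (hlim s hs).congr' ?_
    filter_upwards [hXm, hX, hρ] with a hXm hX hρ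
    rw [hρ, integral_map (htoI.comp_aemeasurable' hXm)
      (measurable_subtype_coe.pow_const s).aestronglyMeasurable]
    exact (integral_congr_ae (hX.mono fun ω hω => htoI_rpow hω s)).symm
  have hpos : ∀ᵐ y : unitInterval ∂(r : Measure unitInterval), (0 : ℝ) < y :=
    ae_pos_of_tendsto_integral_rpow
      (hL.congr' (eventually_nhdsWithin_of_forall fun s hs => (hr s hs).symm))
  have hlog : Measurable fun y : unitInterval => -Real.log y :=
    (Real.measurable_log.comp measurable_subtype_coe).neg
  refine ⟨_, Measure.isProbabilityMeasure_map (μ := (r : Measure unitInterval)) hlog.aemeasurable,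
    ?_, fun s hs => ?_⟩
  · exact (ae_map_iff hlog.aemeasurable measurableSet_Ici).2
      (.of_forall fun y => neg_nonneg.2 (Real.log_nonpos y.2.1 y.2.2))
  · rw [mgf_id_map hlog.aemeasurable, ← hr s hs]
    refine integral_congr_ae (hpos.mono fun y hy => ?_)
    simp only [Real.rpow_def_of_pos hy, neg_mul_neg, mul_comm]

end ContinuityTheorem

end LaplaceTransform

section ProductAsymptotics

lemma abs_floor_sub_floor_sub_le_one {x y : ℝ} (hx : 0 ≤ x) (hxy : x ≤ y) :
    |((⌊y⌋₊ - ⌊x⌋₊ : ℕ) : ℝ) - (y - x)| ≤ 1 := by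
  rw [Nat.cast_sub (Nat.floor_mono hxy), abs_le]
  have := Nat.floor_le hx
  have := Nat.floor_le (hx.trans hxy)
  have := Nat.lt_floor_add_one x
  have := Nat.lt_floor_add_one y
  constructor <;> linarith

variable {ι : Type*} [Fintype ι]

section Bounds

variable {x : ι → ℝ}

lemma log_prod_pow (hx : ∀ i, x i ∈ Ioc 0 1) (n : ι → ℕ) :
    Real.log (∏ i, x i ^ n i) = ∑ i, n i * Real.log (x i) := by
  rw [Real.log_prod fun i _ => pow_ne_zero _ (hx i).1.ne']
  simp only [Real.log_pow]

lemma sum_mul_one_sub_le_neg_log_prod_pow (hx : ∀ i, x i ∈ Ioc 0 1) (n : ι → ℕ) :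
    ∑ i, n i * (1 - x i) ≤ -Real.log (∏ i, x i ^ n i) := by
  rw [log_prod_pow hx, ← Finset.sum_neg_distrib]
  refine Finset.sum_le_sum fun i _ => ?_
  rw [← mul_neg]
  gcongr
  linarith [Real.log_le_sub_one_of_pos (hx i).1]

lemma mul_neg_log_prod_pow_le (hx : ∀ i, x i ∈ Ioc 0 1) (n : ι → ℕ) :
    (1 - ∑ i, (1 - x i)) * -Real.log (∏ i, x i ^ n i) ≤ ∑ i, n i * (1 - x i) := by
  rw [log_prod_pow hx, ← Finset.sum_neg_distrib, Finset.mul_sum]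
  refine Finset.sum_le_sum fun i _ => ?_
  have hlog : -Real.log (x i) ≤ (x i)⁻¹ - 1 := by
    linarith [Real.one_sub_inv_le_log_of_pos (hx i).1]
  have hsum : 1 - x i ≤ ∑ j, (1 - x j) :=
    Finset.single_le_sum (f := fun j => 1 - x j) (fun j _ => sub_nonneg.2 (hx j).2)
      (Finset.mem_univ i)
  calc (1 - ∑ j, (1 - x j)) * -(n i * Real.log (x i))
      = n i * ((1 - ∑ j, (1 - x j)) * -Real.log (x i)) := by ring
    _ ≤ n i * (x i * ((x i)⁻¹ - 1)) := by
        gcongr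
        · exact neg_nonneg.2 (Real.log_nonpos (hx i).1.le (hx i).2)
        · exact (hx i).1.le
        · linarith
    _ = n i * (1 - x i) := by rw [mul_sub, mul_inv_cancel₀ (hx i).1.ne', mul_one]

end Bounds

variable {α : Type*} {l : Filter α} {x w : α → ι → ℝ} {b : ℝ}

lemma tendsto_neg_log_prod_pow_iff (hx : ∀ᶠ a in l, ∀ i, x a i ∈ Ioc 0 1)
    (hx₁ : Tendsto (fun a => ∑ i, (1 - x a i)) l (𝓝 0)) (n : α → ι → ℕ) :
    Tendsto (fun a => -Real.log (∏ i, x a i ^ n a i)) l (𝓝 b) ↔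
      Tendsto (fun a => ∑ i, n a i * (1 - x a i)) l (𝓝 b) := by
  have hfactor : Tendsto (fun a => 1 - ∑ i, (1 - x a i)) l (𝓝 1) := by
    simpa using tendsto_const_nhds.sub hx₁
  have hupper := hx.mono fun a ha => sum_mul_one_sub_le_neg_log_prod_pow ha (n a)
  have hlower := hx.mono fun a ha => mul_neg_log_prod_pow_le ha (n a)
  constructor <;> intro h
  · exact tendsto_of_tendsto_of_tendsto_of_le_of_le' (by simpa using hfactor.mul h) h hlower hupper
  · refine tendsto_of_tendsto_of_tendsto_of_le_of_le' h
      (by simpa only [div_one] using h.div hfactor one_ne_zero) hupper ?_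
    filter_upwards [hlower, hfactor.eventually_const_lt zero_lt_one] with a ha hpos
    exact (le_div_iff₀' hpos).2 ha

lemma tendsto_sum_one_sub_of_sum_mul_le (hx : ∀ᶠ a in l, ∀ i, x a i ∈ Ioc 0 1)
    (hw : ∀ i, Tendsto (w · i) l atTop) {B : α → ℝ}
    (hB : Tendsto B l (𝓝 b)) (hle : ∀ᶠ a in l, ∑ i, w a i * (1 - x a i) ≤ B a) :
    Tendsto (fun a => ∑ i, (1 - x a i)) l (𝓝 0) := by
  have hw₀ : ∀ᶠ a in l, ∀ i, 0 < w a i := eventually_all.2 fun i => (hw i).eventually_gt_atTop 0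
  have hterm (i : ι) : Tendsto (fun a => 1 - x a i) l (𝓝 0) := by
    refine squeeze_zero' (hx.mono fun a ha => sub_nonneg.2 (ha i).2) ?_ (hB.div_atTop (hw i))
    filter_upwards [hx, hw₀, hle] with a hx hw₀ hle
    refine (le_div_iff₀' (hw₀ i)).2 (le_trans ?_ hle)
    exact Finset.single_le_sum (f := fun j => w a j * (1 - x a j))
      (fun j _ => mul_nonneg (hw₀ j).le (sub_nonneg.2 (hx j).2)) (Finset.mem_univ i)
  simpa using tendsto_finsetSum Finset.univ fun i _ => hterm i

lemma tendsto_sum_floor_sub_floor_mul_sub (hx : ∀ᶠ a in l, ∀ i, x a i ∈ Ioc 0 1)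
    (hx₁ : Tendsto (fun a => ∑ i, (1 - x a i)) l (𝓝 0)) (hw : ∀ᶠ a in l, ∀ i, 0 ≤ w a i)
    {t t' : ℝ} (ht : 0 ≤ t) (htt' : t ≤ t') :
    Tendsto (fun a => ∑ i, ((⌊t' * w a i⌋₊ - ⌊t * w a i⌋₊ : ℕ) : ℝ) * (1 - x a i) -
      (t' - t) * ∑ i, w a i * (1 - x a i)) l (𝓝 0) := by
  refine squeeze_zero_norm' ?_ hx₁
  filter_upwards [hx, hw] with a hx hw
  rw [Finset.mul_sum, ← Finset.sum_sub_distrib]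
  refine norm_sum_le_of_le _ fun i _ => ?_
  have hx' : 0 ≤ 1 - x a i := sub_nonneg.2 (hx i).2
  rw [← mul_assoc, ← sub_mul, norm_mul, Real.norm_of_nonneg hx', sub_mul]
  exact mul_le_of_le_one_left hx' (abs_floor_sub_floor_sub_le_one (mul_nonneg ht (hw i))
    (mul_le_mul_of_nonneg_right htt' (hw i)))

lemma tendsto_prod_pow_floor_sub_floor (hx : ∀ᶠ a in l, ∀ i, x a i ∈ Ioc 0 1)
    (hw : ∀ i, Tendsto (w · i) l atTop) {t t' : ℝ} (ht : 0 ≤ t) (htt' : t ≤ t')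
    (h : Tendsto (fun a => ∑ i, w a i * (1 - x a i)) l (𝓝 b)) :
    Tendsto (fun a => ∏ i, x a i ^ (⌊t' * w a i⌋₊ - ⌊t * w a i⌋₊)) l
      (𝓝 (Real.exp (-(b * (t' - t))))) := by
  have hw₀ : ∀ᶠ a in l, ∀ i, 0 ≤ w a i := eventually_all.2 fun i => (hw i).eventually_ge_atTop 0
  have hx₁ := tendsto_sum_one_sub_of_sum_mul_le hx hw h (.of_forall fun _ => le_rfl)
  have hsum := (tendsto_sum_floor_sub_floor_mul_sub hx hx₁ hw₀ ht htt').add (h.const_mul (t' - t))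
  simp only [sub_add_cancel, zero_add, mul_comm _ b] at hsum
  have hlog := (tendsto_neg_log_prod_pow_iff hx hx₁ _).2 hsum
  refine ((Real.continuous_exp.tendsto _).comp hlog.neg).congr' (hx.mono fun a ha => ?_)
  rw [Function.comp_apply, neg_neg, Real.exp_log (Finset.prod_pos fun i _ => pow_pos (ha i).1 _)]

lemma tendsto_sum_mul_one_sub_of_prod_pow_floor (hx : ∀ᶠ a in l, ∀ i, x a i ∈ Ioc 0 1)
    (hw : ∀ i, Tendsto (w · i) l atTop) (hb : 0 < b)
    (h : Tendsto (fun a => ∏ i, x a i ^ ⌊w a i⌋₊) l (𝓝 b)) :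
    Tendsto (fun a => ∑ i, w a i * (1 - x a i)) l (𝓝 (-Real.log b)) := by
  have hlog := (h.log hb.ne').neg
  have hw₀ : ∀ᶠ a in l, ∀ i, 0 ≤ w a i := eventually_all.2 fun i => (hw i).eventually_ge_atTop 0
  have hx₁ := tendsto_sum_one_sub_of_sum_mul_le hx (w := fun a i => ⌊w a i⌋₊)
    (fun i => tendsto_natCast_atTop_atTop.comp (tendsto_nat_floor_atTop.comp (hw i))) hlog
    (hx.mono fun a ha => sum_mul_one_sub_le_neg_log_prod_pow ha _)
  have hfloor := tendsto_sum_floor_sub_floor_mul_sub hx hx₁ hw₀ le_rfl zero_le_one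
  simpa using ((tendsto_neg_log_prod_pow_iff hx hx₁ _).1 hlog).sub hfloor

end ProductAsymptotics

section MarkovRenewal

variable {X Ω : Type*} [MeasurableSpace X] [MeasurableSpace Ω]

/-- A Markov renewal process observed from a fixed family of initial states: `η` is the embedded
chain, `κ (k + 1)` the sojourn time spent between its `k`-th and `(k + 1)`-st transition, and the
law `P i` starts the chain at `i`. The joint law of a finite stretch of the process is the product
of the one-step laws; its instance `n = 0` says that `η 0 = i` almost surely under `P i`. -/
structure IsMarkovRenewal (P : X → Measure Ω) (η : ℕ → Ω → X) (κ : ℕ → Ω → ℝ) : Prop where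
  isProbabilityMeasure : ∀ i, IsProbabilityMeasure (P i)
  measurable_state : ∀ n, Measurable (η n)
  measurable_sojourn : ∀ n, Measurable (κ n)
  sojourn_nonneg : ∀ n ω, 0 ≤ κ n ω
  measure_path : ∀ (n : ℕ) (I : ℕ → X) (T : ℕ → ℝ),
    P (I 0) {ω | (∀ k ≤ n, η k ω = I k) ∧ ∀ k < n, κ (k + 1) ω ≤ T k} =
      ∏ k ∈ Finset.range n, P (I k) {ω | η 1 ω = I (k + 1) ∧ κ 1 ω ≤ T k}

namespace IsMarkovRenewal

variable {P : X → Measure Ω} {η : ℕ → Ω → X} {κ : ℕ → Ω → ℝ}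

lemma map_restrict_path (H : IsMarkovRenewal P η κ) (n : ℕ) (I : ℕ → X) :
    ((P (I 0)).restrict {ω | ∀ k ≤ n, η k ω = I k}).map (fun ω (k : Fin n) => κ (k + 1) ω) =
      Measure.pi fun k : Fin n => ((P (I k)).restrict {ω | η 1 ω = I (k + 1)}).map (κ 1) := by
  have := H.isProbabilityMeasure
  have hκ : Measurable fun ω (k : Fin n) => κ (k + 1) ω :=
    measurable_pi_lambda _ fun k => H.measurable_sojourn _
  symm
  apply Measure.pi_eq_generateFrom (C := fun _ => range Iic)
  · exact fun _ => (borel_eq_generateFrom_Iic ℝ).symm.trans BorelSpace.measurable_eq.symm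
  · exact fun _ => isPiSystem_Iic
  · exact fun _ => ⟨fun N : ℕ => Iic (N : ℝ), fun N => ⟨_, rfl⟩, fun _ => measure_lt_top _ _,
      iUnion_eq_univ_iff.2 exists_nat_ge⟩
  · intro s hs
    choose T hT using hs
    obtain rfl : (fun k => Iic (T k)) = s := funext hT
    let T' : ℕ → ℝ := fun k => if hk : k < n then T ⟨k, hk⟩ else 0
    have hT' (k : Fin n) : T' k = T k := by simp [T']
    have hrect : MeasurableSet (univ.pi fun k => Iic (T k)) :=
      .univ_pi fun _ => measurableSet_Iic
    rw [Measure.map_apply hκ hrect, Measure.restrict_apply (hκ hrect)]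
    calc P (I 0) ((fun ω (k : Fin n) => κ (k + 1) ω) ⁻¹' univ.pi (fun k => Iic (T k)) ∩
          {ω | ∀ k ≤ n, η k ω = I k})
        = P (I 0) {ω | (∀ k ≤ n, η k ω = I k) ∧ ∀ k < n, κ (k + 1) ω ≤ T' k} := by
          congr 1
          ext ω
          refine ⟨fun ⟨ht, hp⟩ => ⟨hp, fun k hk => ?_⟩, fun ⟨hp, ht⟩ => ⟨fun k _ => ?_, hp⟩⟩
          · exact (ht ⟨k, hk⟩ trivial).trans_eq (hT' ⟨k, hk⟩).symm
          · exact (ht k k.2).trans_eq (hT' k)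
      _ = ∏ k : Fin n, P (I k) {ω | η 1 ω = I (k + 1) ∧ κ 1 ω ≤ T k} := by
          simp only [H.measure_path, Finset.prod_range, hT']
      _ = _ := by
          refine Finset.prod_congr rfl fun k _ => ?_
          rw [Measure.map_apply (H.measurable_sojourn 1) measurableSet_Iic,
            Measure.restrict_apply (H.measurable_sojourn 1 measurableSet_Iic)]
          congr 1
          exact inter_comm _ _

lemma setLIntegral_path (H : IsMarkovRenewal P η κ) (n : ℕ) (I : ℕ → X) {h : ℕ → ℝ → ℝ≥0∞}
    (hh : ∀ k, Measurable (h k)) :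
    ∫⁻ ω in {ω | ∀ k ≤ n, η k ω = I k}, ∏ k ∈ Finset.range n, h k (κ (k + 1) ω) ∂P (I 0) =
      ∏ k ∈ Finset.range n, ∫⁻ ω in {ω | η 1 ω = I (k + 1)}, h k (κ 1 ω) ∂P (I k) := by
  have := H.isProbabilityMeasure
  have hκ : Measurable fun ω (k : Fin n) => κ (k + 1) ω :=
    measurable_pi_lambda _ fun k => H.measurable_sojourn _
  have hlaw := lintegral_pi_prod
    (fun k : Fin n => ((P (I k)).restrict {ω | η 1 ω = I (k + 1)}).map (κ 1)) fun k => hh k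
  rw [← H.map_restrict_path n I, lintegral_map (by fun_prop) hκ] at hlaw
  simp only [Finset.prod_range, hlaw]
  exact Finset.prod_congr rfl fun k _ => lintegral_map (hh k) (H.measurable_sojourn 1)

variable [MeasurableSingletonClass X]

lemma measurableSet_state_eq (H : IsMarkovRenewal P η κ) (n : ℕ) (i : X) :
    MeasurableSet {ω | η n ω = i} :=
  H.measurable_state n (measurableSet_singleton i)

lemma measurableSet_path (H : IsMarkovRenewal P η κ) (n : ℕ) (I : ℕ → X) :
    MeasurableSet {ω | ∀ k ≤ n, η k ω = I k} := by
  simp only [ofPred_forall]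
  exact .iInter fun k => .iInter fun _ => H.measurableSet_state_eq k (I k)

lemma ae_state_zero_eq (H : IsMarkovRenewal P η κ) (i : X) : ∀ᵐ ω ∂P i, η 0 ω = i := by
  have := H.isProbabilityMeasure i
  refine (mem_ae_iff_prob_eq_one (H.measurableSet_state_eq 0 i)).2 ?_
  simpa using H.measure_path 0 (fun _ => i) 0

lemma of_semiMarkovKernel (hP : ∀ i, IsProbabilityMeasure (P i))
    (hη : ∀ n, Measurable (η n)) (hκ : ∀ n, Measurable (κ n)) (hκ₀ : ∀ n ω, 0 ≤ κ n ω)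
    {Q : X → X → ℝ → ℝ}
    (hQ : ∀ (n : ℕ) (I : ℕ → X) (T : ℕ → ℝ),
      P (I 0) {ω | (∀ k ≤ n, η k ω = I k) ∧ ∀ k < n, κ (k + 1) ω ≤ T k} =
        ENNReal.ofReal (∏ k ∈ Finset.range n, Q (I k) (I (k + 1)) (T k))) :
    IsMarkovRenewal P η κ where
  isProbabilityMeasure := hP
  measurable_state := hη
  measurable_sojourn := hκ
  sojourn_nonneg := hκ₀
  measure_path n I T := by
    have hstart (i : X) : ∀ᵐ ω ∂P i, η 0 ω = i :=
      (mem_ae_iff_prob_eq_one (hη 0 (measurableSet_singleton i))).2 <| by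
        change P i {ω | η 0 ω = i} = 1
        simpa using hQ 0 (fun _ => i) 0
    have hstep (i j : X) (t : ℝ) : P i {ω | η 1 ω = j ∧ κ 1 ω ≤ t} = ENNReal.ofReal (Q i j t) := by
      have h := hQ 1 (fun k => if k = 0 then i else j) fun _ => t
      simp only [Finset.prod_range_one, zero_add, one_ne_zero, if_true, if_false] at h
      rw [← h]
      apply measure_congr
      filter_upwards [hstart i] with ω hω
      apply propext
      change η 1 ω = j ∧ κ 1 ω ≤ t ↔
        (∀ k ≤ 1, η k ω = if k = 0 then i else j) ∧ ∀ k < 1, κ (k + 1) ω ≤ t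
      simp [Nat.le_one_iff_eq_zero_or_eq_one, hω]
    have hanti : Antitone fun n =>
        ENNReal.ofReal (∏ k ∈ Finset.range n, Q (I k) (I (k + 1)) (T k)) := fun a b hab => by
      simp only [← hQ]
      exact measure_mono fun ω h =>
        ⟨fun k hk => h.1 k (hk.trans hab), fun k hk => h.2 k (hk.trans_le hab)⟩
    rw [hQ, ofReal_prod_range_of_antitone hanti]
    simp only [hstep]

lemma of_semiMarkovKernel_Icc (hP : ∀ i, IsProbabilityMeasure (P i))
    (hη : ∀ n, Measurable (η n)) (hκ : ∀ n, Measurable (κ n)) (hκ₀ : ∀ n ω, 0 ≤ κ n ω)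
    {Q : X → X → ℝ → ℝ}
    (hQ : ∀ (n : ℕ) (I : ℕ → X) (T : ℕ → ℝ),
      P (I 0) {ω | ∀ k ≤ n, η k ω = I k ∧ (1 ≤ k → κ k ω ≤ T k)} =
        ENNReal.ofReal (∏ k ∈ Finset.Icc 1 n, Q (I (k - 1)) (I k) (T k))) :
    IsMarkovRenewal P η κ := by
  refine of_semiMarkovKernel hP hη hκ hκ₀ (Q := Q) fun n I T => ?_
  have h := hQ n I fun k => T (k - 1)
  simp only [prod_Icc_one_eq_prod_range, Nat.add_sub_cancel] at h
  rw [← h]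
  congr 1 with ω
  simp only [mem_ofPred_eq, forall₂_and]
  refine and_congr_right fun _ => ⟨fun hκ k hk hk₁ => ?_, fun hκ k hk => ?_⟩
  · simpa [Nat.sub_add_cancel hk₁] using hκ (k - 1) (by omega)
  · simpa using hκ (k + 1) hk (by omega)

lemma setLIntegral_path_eq_sum [Fintype X] (H : IsMarkovRenewal P η κ) (K : ℕ)
    (I : ℕ → X) (μ : Measure Ω) (F : Ω → ℝ≥0∞) :
    ∫⁻ ω in {ω | ∀ k ≤ K, η k ω = I k}, F ω ∂μ =
      ∑ j, ∫⁻ ω in {ω | ∀ k ≤ K + 1, η k ω = Function.update I (K + 1) j k}, F ω ∂μ := by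
  rw [lintegral_eq_sum_setLIntegral_eq _ (H.measurable_state (K + 1))]
  refine Finset.sum_congr rfl fun j _ => ?_
  rw [Measure.restrict_restrict (H.measurableSet_state_eq (K + 1) j)]
  congr 2
  ext ω
  change η (K + 1) ω = j ∧ (∀ k ≤ K, η k ω = I k) ↔ _
  simp only [mem_ofPred_eq, Nat.le_succ_iff, or_imp, forall_and, forall_eq,
    Function.update_self, and_comm (a := η (K + 1) ω = j)]
  refine and_congr_left fun _ => forall₂_congr fun k hk => ?_
  rw [Function.update_of_ne (by omega)]

end IsMarkovRenewal

end MarkovRenewal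

section PathWeights

variable {X Ω : Type*} [MeasurableSpace Ω]

/-- The multiplicative functional `∏_{k < K} G k (η 0, η 1, …) (κ (k + 1))` of a Markov renewal
process. -/
def pathProd (G : ℕ → (ℕ → X) → ℝ → ℝ≥0∞) (η : ℕ → Ω → X) (κ : ℕ → Ω → ℝ) (K : ℕ) (ω : Ω) :
    ℝ≥0∞ :=
  ∏ k ∈ Finset.range K, G k (fun n => η n ω) (κ (k + 1) ω)

/-- `G` is a sequence of one-step densities along the trajectory: the `k`-th factor depends on the
states up to time `k + 1` only, and has mean one conditionally on the states up to time `k`. Thus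
`pathProd G η κ` is a mean-one martingale. -/
structure IsPathWeight (P : X → Measure Ω) (η : ℕ → Ω → X) (κ : ℕ → Ω → ℝ)
    (G : ℕ → (ℕ → X) → ℝ → ℝ≥0∞) : Prop where
  measurable : ∀ k I, Measurable (G k I)
  dependsOn : ∀ k, DependsOn (G k) (Iic (k + 1))
  lintegral_update : ∀ k (I : ℕ → X),
    ∫⁻ ω, G k (Function.update I (k + 1) (η 1 ω)) (κ 1 ω) ∂P (I k) = 1

namespace IsPathWeight

variable {P : X → Measure Ω} {η : ℕ → Ω → X} {κ : ℕ → Ω → ℝ} {G : ℕ → (ℕ → X) → ℝ → ℝ≥0∞}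

variable [MeasurableSpace X] [MeasurableSingletonClass X]

lemma setLIntegral_pathProd (hG : IsPathWeight P η κ G) (H : IsMarkovRenewal P η κ) (K : ℕ)
    (I : ℕ → X) :
    ∫⁻ ω in {ω | ∀ k ≤ K, η k ω = I k}, pathProd G η κ K ω ∂P (I 0) =
      ∏ k ∈ Finset.range K, ∫⁻ ω in {ω | η 1 ω = I (k + 1)}, G k I (κ 1 ω) ∂P (I k) := by
  rw [← H.setLIntegral_path K I fun k => hG.measurable k I]
  refine setLIntegral_congr_fun (H.measurableSet_path K I) fun ω hω => ?_
  refine Finset.prod_congr rfl fun k hk => ?_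
  have hk : k + 1 ≤ K := Finset.mem_range.1 hk
  exact congrFun (hG.dependsOn k fun l hl => hω l (le_trans hl hk)) _

variable [Finite X]

lemma setLIntegral_pathProd_succ (hG : IsPathWeight P η κ G) (H : IsMarkovRenewal P η κ) (K : ℕ)
    (I : ℕ → X) :
    ∫⁻ ω in {ω | ∀ k ≤ K, η k ω = I k}, pathProd G η κ (K + 1) ω ∂P (I 0) =
      ∫⁻ ω in {ω | ∀ k ≤ K, η k ω = I k}, pathProd G η κ K ω ∂P (I 0) := by
  cases nonempty_fintype X
  have hpast (j : X) (k : ℕ) (hk : k < K) :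
      G k (Function.update I (K + 1) j) = G k I := by
    refine hG.dependsOn k fun l hl => Function.update_of_ne ?_ _ _
    have : l ≤ k + 1 := hl
    omega
  have hpath (j : X) :
      ∫⁻ ω in {ω | ∀ k ≤ K + 1, η k ω = Function.update I (K + 1) j k},
          pathProd G η κ (K + 1) ω ∂P (I 0) =
        (∏ k ∈ Finset.range K, ∫⁻ ω in {ω | η 1 ω = I (k + 1)}, G k I (κ 1 ω) ∂P (I k)) *
          ∫⁻ ω in {ω | η 1 ω = j}, G K (Function.update I (K + 1) j) (κ 1 ω) ∂P (I K) := by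
    have h := hG.setLIntegral_pathProd H (K + 1) (Function.update I (K + 1) j)
    rw [Finset.prod_range_succ, Function.update_self, Function.update_of_ne K.succ_ne_self.symm,
      Function.update_of_ne K.succ_ne_zero.symm] at h
    rw [h]
    congr 1
    refine Finset.prod_congr rfl fun k hk => ?_
    have hk := Finset.mem_range.1 hk
    rw [hpast j k hk, Function.update_of_ne (by omega), Function.update_of_ne (by omega)]
  have hfiber (j : X) :
      ∫⁻ ω in {ω | η 1 ω = j}, G K (Function.update I (K + 1) j) (κ 1 ω) ∂P (I K) =
        ∫⁻ ω in {ω | η 1 ω = j}, G K (Function.update I (K + 1) (η 1 ω)) (κ 1 ω) ∂P (I K) :=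
    setLIntegral_congr_fun (H.measurableSet_state_eq 1 j) fun ω hω => by
      rw [show η 1 ω = j from hω]
  rw [H.setLIntegral_path_eq_sum, hG.setLIntegral_pathProd H]
  simp only [hpath, hfiber, ← Finset.mul_sum]
  rw [← lintegral_eq_sum_setLIntegral_eq _ (H.measurable_state 1), hG.lintegral_update, mul_one]

lemma setLIntegral_pathProd_add (hG : IsPathWeight P η κ G) (H : IsMarkovRenewal P η κ)
    (K n : ℕ) (I : ℕ → X) :
    ∫⁻ ω in {ω | ∀ k ≤ K, η k ω = I k}, pathProd G η κ (K + n) ω ∂P (I 0) =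
      ∫⁻ ω in {ω | ∀ k ≤ K, η k ω = I k}, pathProd G η κ K ω ∂P (I 0) := by
  cases nonempty_fintype X
  induction n generalizing K I with
  | zero => rfl
  | succ n ih =>
    have hstart (j : X) : P (I 0) = P (Function.update I (K + 1) j 0) := by
      rw [Function.update_of_ne K.succ_ne_zero.symm]
    rw [← hG.setLIntegral_pathProd_succ H K I, H.setLIntegral_path_eq_sum,
      H.setLIntegral_path_eq_sum]
    refine Finset.sum_congr rfl fun j _ => ?_
    rw [hstart j, ← ih (K + 1), Nat.succ_add_eq_add_succ]

lemma lintegral_pathProd (hG : IsPathWeight P η κ G) (H : IsMarkovRenewal P η κ) (i : X) (K : ℕ) :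
    ∫⁻ ω, pathProd G η κ K ω ∂P i = 1 := by
  have := H.isProbabilityMeasure i
  have hstart : P i = (P i).restrict {ω | ∀ k ≤ 0, η k ω = i} := by
    refine (Measure.restrict_eq_self_of_ae_mem ?_).symm
    filter_upwards [H.ae_state_zero_eq i] with ω hω k hk
    rwa [Nat.le_zero.1 hk]
  have h := hG.setLIntegral_pathProd_add H 0 K fun _ => i
  rw [← hstart, zero_add] at h
  simpa [pathProd] using h

lemma measurable_pathProd (hG : IsPathWeight P η κ G) (H : IsMarkovRenewal P η κ) (K : ℕ) :
    Measurable (pathProd G η κ K) := by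
  refine Finset.measurable_fun_prod _ fun k _ => ?_
  let extend (J : Iic (k + 1) → X) (n : ℕ) : X :=
    J ⟨min n (k + 1), mem_Iic.2 (min_le_right n (k + 1))⟩
  have hextend (ω : Ω) : G k (fun n => η n ω) = G k (extend fun n => η n ω) :=
    hG.dependsOn k fun n hn => by simp only [extend, min_eq_left (mem_Iic.1 hn)]
  simp only [hextend]
  have hG' : Measurable fun z : (Iic (k + 1) → X) × ℝ => G k (extend z.1) z.2 :=
    measurable_from_prod_countable_right fun J => hG.measurable k (extend J)
  have hpath : Measurable fun ω (n : Iic (k + 1)) => η n ω :=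
    measurable_pi_lambda _ fun n => H.measurable_state n
  exact hG'.comp (hpath.prodMk (H.measurable_sojourn (k + 1)))

end IsPathWeight

end PathWeights

section Recurrence

lemma tendsto_count_atTop {p : ℕ → Prop} [DecidablePred p] (hp : ∃ᶠ n in atTop, p n) :
    Tendsto (Nat.count p) atTop atTop :=
  tendsto_atTop_atTop_of_monotone (Nat.count_monotone p) fun n =>
    ⟨Nat.nth p n, (Nat.count_nth_of_infinite (Nat.frequently_atTop_iff_infinite.1 hp) n).ge⟩

variable {X Ω : Type*} [MeasurableSpace Ω] {P : X → Measure Ω} {η : ℕ → Ω → X} {κ : ℕ → Ω → ℝ}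

open scoped Classical in
/-- The weight betting against the transition `a → b` from time `n₀` on: with `p` the probability
of that transition, each visit to `a` multiplies the stake by `p` if the next state is `b`, and by
`1 + p` otherwise. The bet is fair because `p * p + (1 + p) * (1 - p) = 1`. -/
def transitionBet (P : X → Measure Ω) (η : ℕ → Ω → X) (a b : X) (n₀ k : ℕ) (I : ℕ → X) (_ : ℝ) :
    ℝ≥0∞ :=
  if I k = a ∧ n₀ ≤ k then
    if I (k + 1) = b then P a {ω | η 1 ω = b} else 1 + P a {ω | η 1 ω = b}
  else 1

open scoped Classical in
lemma transitionBet_eq_of_ne {a b : X} {n₀ k : ℕ} {I : ℕ → X} (hb : ∀ n ≥ n₀, I n ≠ b) (x : ℝ) :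
    transitionBet P η a b n₀ k I x =
      if I k = a ∧ n₀ ≤ k then 1 + P a {ω | η 1 ω = b} else 1 := by
  refine ite_congr rfl (fun hk => ?_) fun _ => rfl
  exact if_neg (hb (k + 1) (hk.2.trans k.le_succ))

lemma tendsto_pathProd_transitionBet {a b : X} (hab : P a {ω | η 1 ω = b} ≠ 0) {n₀ : ℕ} {ω : Ω}
    (ha : ∃ᶠ n in atTop, η n ω = a) (hb : ∀ n ≥ n₀, η n ω ≠ b) :
    Tendsto (fun K => pathProd (transitionBet P η a b n₀) η κ K ω) atTop (𝓝 ⊤) := by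
  classical
  have hpow (K : ℕ) : pathProd (transitionBet P η a b n₀) η κ K ω =
      (1 + P a {ω | η 1 ω = b}) ^ Nat.count (fun k => η k ω = a ∧ n₀ ≤ k) K := by
    simp only [pathProd, transitionBet_eq_of_ne hb, Finset.prod_ite, Finset.prod_const, one_pow,
      mul_one, Nat.count_eq_card_filter_range]
  have hvisits : Tendsto (Nat.count fun k => η k ω = a ∧ n₀ ≤ k) atTop atTop :=
    tendsto_count_atTop (ha.and_eventually (eventually_ge_atTop n₀))
  simp only [hpow]
  exact (ENNReal.tendsto_pow_atTop_nhds_top_iff.2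
    (ENNReal.lt_add_right ENNReal.one_ne_top hab)).comp hvisits

variable [MeasurableSpace X] [MeasurableSingletonClass X]

lemma IsMarkovRenewal.isPathWeight_transitionBet (H : IsMarkovRenewal P η κ) (a b : X) (n₀ : ℕ) :
    IsPathWeight P η κ (transitionBet P η a b n₀) where
  measurable _ _ := measurable_const
  dependsOn k I J hIJ := by
    classical
    have h₁ : I k = J k := hIJ k (mem_Iic.2 k.le_succ)
    have h₂ : I (k + 1) = J (k + 1) := hIJ (k + 1) self_mem_Iic
    ext x
    simp only [transitionBet, h₁, h₂]
  lintegral_update k I := by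
    classical
    have := H.isProbabilityMeasure
    simp only [transitionBet, Function.update_self, Function.update_of_ne k.succ_ne_self.symm]
    by_cases hk : I k = a ∧ n₀ ≤ k
    · obtain ⟨rfl, hn⟩ := hk
      have hs := H.measurableSet_state_eq 1 b
      simp only [hn, and_self, if_true]
      set p := P (I k) {ω | η 1 ω = b}
      have hb : ∫⁻ ω in {ω | η 1 ω = b}, (if η 1 ω = b then p else 1 + p) ∂P (I k) = p * p := by
        exact (setLIntegral_congr_fun hs fun ω hω => if_pos hω).trans (setLIntegral_const _ _)
      have hb' : ∫⁻ ω in {ω | η 1 ω = b}ᶜ, (if η 1 ω = b then p else 1 + p) ∂P (I k) =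
          (1 + p) * P (I k) {ω | η 1 ω = b}ᶜ := by
        exact (setLIntegral_congr_fun hs.compl fun ω hω => if_neg hω).trans (setLIntegral_const _ _)
      have hsum : p + P (I k) {ω | η 1 ω = b}ᶜ = 1 := prob_add_prob_compl hs
      rw [← lintegral_add_compl _ hs, hb, hb']
      calc p * p + (1 + p) * P (I k) {ω | η 1 ω = b}ᶜ
          = p * (p + P (I k) {ω | η 1 ω = b}ᶜ) + P (I k) {ω | η 1 ω = b}ᶜ := by ring
        _ = 1 := by rw [hsum, mul_one, hsum]
    · simp only [hk, if_false, lintegral_one, measure_univ]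

variable [Finite X]

lemma IsPathWeight.ae_liminf_pathProd_lt_top {G : ℕ → (ℕ → X) → ℝ → ℝ≥0∞}
    (hG : IsPathWeight P η κ G) (H : IsMarkovRenewal P η κ) (i : X) :
    ∀ᵐ ω ∂P i, liminf (fun K => pathProd G η κ K ω) atTop < ⊤ := by
  refine ae_lt_top (.liminf fun K => hG.measurable_pathProd H K) (ne_top_of_le_ne_top ?_
    (lintegral_liminf_le fun K => hG.measurable_pathProd H K))
  simp only [hG.lintegral_pathProd H, liminf_const]
  exact ENNReal.one_ne_top

lemma IsMarkovRenewal.ae_frequently_imp_frequently (H : IsMarkovRenewal P η κ) {a b : X}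
    (hab : P a {ω | η 1 ω = b} ≠ 0) (i : X) :
    ∀ᵐ ω ∂P i, (∃ᶠ n in atTop, η n ω = a) → ∃ᶠ n in atTop, η n ω = b := by
  have hfin := ae_all_iff.2 fun n₀ =>
    (H.isPathWeight_transitionBet a b n₀).ae_liminf_pathProd_lt_top H i
  filter_upwards [hfin] with ω hω ha
  by_contra hb
  obtain ⟨n₀, hn₀⟩ := eventually_atTop.1 (not_frequently.1 hb)
  exact (hω n₀).ne (tendsto_pathProd_transitionBet hab ha hn₀).liminf_eq

lemma IsMarkovRenewal.ae_frequently_eq (H : IsMarkovRenewal P η κ)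
    (hirr : ∀ i j, Relation.ReflTransGen (fun a b => P a {ω | η 1 ω = b} ≠ 0) i j) (i : X) :
    ∀ᵐ ω ∂P i, ∀ j, ∃ᶠ n in atTop, η n ω = j := by
  have hstep : ∀ᵐ ω ∂P i, ∀ a b, P a {ω | η 1 ω = b} ≠ 0 →
      (∃ᶠ n in atTop, η n ω = a) → ∃ᶠ n in atTop, η n ω = b := by
    simp only [ae_all_iff]
    exact fun a b hab => H.ae_frequently_imp_frequently hab i
  filter_upwards [hstep] with ω hω j
  obtain ⟨a, ha⟩ : ∃ a, ∃ᶠ n in atTop, η n ω = a := by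
    by_contra h
    simp only [not_exists, not_frequently] at h
    obtain ⟨n, hn⟩ := (eventually_all.2 h).exists
    exact hn _ rfl
  induction hirr a j with
  | refl => exact ha
  | tail _ hbc ih => exact hω _ _ hbc ih

end Recurrence

section Visits

variable {X Ω : Type*}

section DecidableEq

variable [DecidableEq X]

/-- The path weight whose factor at time `k` is `f i n`, where `i` is the state at time `k` and `n`
the number of earlier visits to it. -/
def visitWeight (f : X → ℕ → ℝ → ℝ≥0∞) (k : ℕ) (I : ℕ → X) : ℝ → ℝ≥0∞ :=
  f (I k) (Nat.count (fun l => I l = I k) k)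

lemma dependsOn_visitWeight (f : X → ℕ → ℝ → ℝ≥0∞) (k : ℕ) :
    DependsOn (visitWeight f k) (Iic k) := by
  intro I J hIJ
  have hcount : Nat.count (fun l => I l = I k) k = Nat.count (fun l => J l = J k) k := by
    simp only [Nat.count_eq_card_filter_range]
    congr 1
    refine Finset.filter_congr fun l hl => ?_
    rw [hIJ l (Finset.mem_range.1 hl).le, hIJ k self_mem_Iic]
  unfold visitWeight
  rw [hcount, hIJ k self_mem_Iic]

section Fintype

variable [Fintype X]

lemma prod_range_eq_prod_prod_nth {M : Type*} [CommMonoid M] (I : ℕ → X) (F : X → ℕ → ℕ → M)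
    (K : ℕ) :
    ∏ k ∈ Finset.range K, F (I k) (Nat.count (fun l => I l = I k) k) k =
      ∏ i, ∏ n ∈ Finset.range (Nat.count (fun l => I l = i) K),
        F i n (Nat.nth (fun l => I l = i) n) := by
  induction K with
  | zero => simp only [Finset.range_zero, Finset.prod_empty, Nat.count_zero, Finset.prod_const_one]
  | succ K ih =>
    have hcount (i : X) :
        ∏ n ∈ Finset.range (Nat.count (fun l => I l = i) (K + 1)),
            F i n (Nat.nth (fun l => I l = i) n) =
          (∏ n ∈ Finset.range (Nat.count (fun l => I l = i) K),
            F i n (Nat.nth (fun l => I l = i) n)) *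
            if I K = i then F i (Nat.count (fun l => I l = i) K) K else 1 := by
      rw [Nat.count_succ]
      split_ifs with h
      · rw [Finset.prod_range_succ, Nat.nth_count (p := fun l => I l = i) h]
      · rw [add_zero, mul_one]
    rw [Finset.prod_range_succ, ih, Finset.prod_congr rfl fun i _ => hcount i,
      Finset.prod_mul_distrib, Finset.prod_ite_eq Finset.univ (I K), if_pos (Finset.mem_univ _)]

variable {η : ℕ → Ω → X} {κ : ℕ → Ω → ℝ} {f : X → ℕ → ℝ → ℝ≥0∞}

lemma pathProd_visitWeight (K : ℕ) (ω : Ω) :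
    pathProd (visitWeight f) η κ K ω =
      ∏ i, ∏ n ∈ Finset.range (Nat.count (fun l => η l ω = i) K),
        f i n (κ (Nat.nth (fun l => η l ω = i) n + 1) ω) :=
  prod_range_eq_prod_prod_nth (fun k => η k ω) (fun i n k => f i n (κ (k + 1) ω)) K

lemma tendsto_pathProd_visitWeight {N : X → ℕ} (hN : ∀ i n, N i ≤ n → ∀ x, f i n x = 1) {ω : Ω}
    (hω : ∀ i, ∃ᶠ n in atTop, η n ω = i) :
    Tendsto (fun K => pathProd (visitWeight f) η κ K ω) atTop
      (𝓝 (∏ i, ∏ n ∈ Finset.range (N i), f i n (κ (Nat.nth (fun l => η l ω = i) n + 1) ω))) := by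
  have hvisits : ∀ᶠ K in atTop, ∀ i, N i ≤ Nat.count (fun l => η l ω = i) K :=
    eventually_all.2 fun i => (tendsto_count_atTop (hω i)).eventually_ge_atTop (N i)
  refine tendsto_const_nhds.congr' (hvisits.mono fun K hK => ?_)
  simp only [pathProd_visitWeight]
  refine Finset.prod_congr rfl fun i _ => Finset.prod_subset (Finset.range_mono (hK i)) ?_
  exact fun n _ hn => hN i n (not_lt.1 (mt Finset.mem_range.2 hn)) _

lemma pathProd_visitWeight_le {N : X → ℕ} (hN : ∀ i n, N i ≤ n → ∀ x, f i n x = 1)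
    {C : X → ℕ → ℝ≥0∞} (hC : ∀ i n, 1 ≤ C i n) (hfC : ∀ i n x, 0 ≤ x → f i n x ≤ C i n) {ω : Ω}
    (hκ : ∀ n, 0 ≤ κ n ω) (K : ℕ) :
    pathProd (visitWeight f) η κ K ω ≤ ∏ i, ∏ n ∈ Finset.range (N i), C i n := by
  rw [pathProd_visitWeight]
  refine Finset.prod_le_prod' fun i _ => ?_
  calc ∏ n ∈ Finset.range _, f i n _
      ≤ ∏ n ∈ Finset.range _, if n < N i then C i n else 1 := by
        refine Finset.prod_le_prod' fun n _ => ?_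
        split_ifs with hn
        · exact hfC i n _ (hκ _)
        · exact (hN i n (not_lt.1 hn) _).le
    _ ≤ ∏ n ∈ Finset.range (N i), C i n := by
        rw [← Finset.prod_filter]
        refine Finset.prod_le_prod_of_subset_of_one_le' (fun n hn => ?_) fun n _ _ => hC i n
        exact Finset.mem_range.2 (Finset.mem_filter.1 hn).2

end Fintype

variable [MeasurableSpace Ω] {P : X → Measure Ω} {η : ℕ → Ω → X} {κ : ℕ → Ω → ℝ}
  {f : X → ℕ → ℝ → ℝ≥0∞}

lemma isPathWeight_visitWeight (hf : ∀ i n, Measurable (f i n))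
    (hmean : ∀ i n, ∫⁻ ω, f i n (κ 1 ω) ∂P i = 1) :
    IsPathWeight P η κ (visitWeight f) where
  measurable _ _ := hf _ _
  dependsOn k I J hIJ := dependsOn_visitWeight f k fun l hl => hIJ l (Iic_subset_Iic.2 k.le_succ hl)
  lintegral_update k I := by
    have hpast (j : X) : visitWeight f k (Function.update I (k + 1) j) = visitWeight f k I :=
      dependsOn_visitWeight f k fun l hl =>
        Function.update_of_ne (Nat.lt_succ_of_le hl).ne _ _
    simp only [hpast]
    exact hmean _ _

end DecidableEq

variable [Fintype X] [MeasurableSpace X] [MeasurableSingletonClass X] [MeasurableSpace Ω]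
  {P : X → Measure Ω} {η : ℕ → Ω → X} {κ : ℕ → Ω → ℝ} {f : X → ℕ → ℝ → ℝ≥0∞}

namespace IsMarkovRenewal

lemma lintegral_prod_visits_of_mean_one (H : IsMarkovRenewal P η κ)
    (hirr : ∀ i j, Relation.ReflTransGen (fun a b => P a {ω | η 1 ω = b} ≠ 0) i j)
    (hf : ∀ i n, Measurable (f i n)) (hmean : ∀ i n, ∫⁻ ω, f i n (κ 1 ω) ∂P i = 1)
    {N : X → ℕ} (hN : ∀ i n, N i ≤ n → ∀ x, f i n x = 1)
    {C : X → ℕ → ℝ≥0∞} (hC₁ : ∀ i n, 1 ≤ C i n) (hC : ∀ i n, C i n ≠ ⊤)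
    (hfC : ∀ i n x, 0 ≤ x → f i n x ≤ C i n) (i₀ : X) :
    ∫⁻ ω, ∏ i, ∏ n ∈ Finset.range (N i), f i n (κ (Nat.nth (fun l => η l ω = i) n + 1) ω) ∂P i₀ =
      1 := by
  classical
  have := H.isProbabilityMeasure i₀
  have hG : IsPathWeight P η κ (visitWeight f) := isPathWeight_visitWeight hf hmean
  have hC' : ∫⁻ _, ∏ i, ∏ n ∈ Finset.range (N i), C i n ∂P i₀ ≠ ⊤ := by
    rw [lintegral_const, measure_univ, mul_one]
    exact ENNReal.prod_ne_top fun i _ => ENNReal.prod_ne_top fun n _ => hC i n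
  refine tendsto_nhds_unique (tendsto_lintegral_of_dominated_convergence _
    (hG.measurable_pathProd H) (fun K => .of_forall fun ω => pathProd_visitWeight_le hN hC₁ hfC
      (H.sojourn_nonneg · ω) K) hC'
    ((H.ae_frequently_eq hirr i₀).mono fun _ => tendsto_pathProd_visitWeight hN)) ?_
  simp only [hG.lintegral_pathProd H, tendsto_const_nhds_iff]

lemma lintegral_prod_visits_mul_inv (H : IsMarkovRenewal P η κ)
    (hirr : ∀ i j, Relation.ReflTransGen (fun a b => P a {ω | η 1 ω = b} ≠ 0) i j)
    (hf : ∀ i n, Measurable (f i n)) (hf₁ : ∀ i n x, 0 ≤ x → f i n x ≤ 1)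
    {φ : X → ℕ → ℝ≥0∞} (hφ : ∀ i n, ∫⁻ ω, f i n (κ 1 ω) ∂P i = φ i n)
    (hφ₀ : ∀ i n, φ i n ≠ 0) (hφ₁ : ∀ i n, φ i n ≤ 1) (N : X → ℕ) (i₀ : X) :
    ∫⁻ ω, ∏ i, ∏ n ∈ Finset.range (N i),
      f i n (κ (Nat.nth (fun l => η l ω = i) n + 1) ω) * (φ i n)⁻¹ ∂P i₀ = 1 := by
  have := H.isProbabilityMeasure
  have hφinv (i : X) (n : ℕ) : (φ i n)⁻¹ ≠ ⊤ := ENNReal.inv_ne_top.2 (hφ₀ i n)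
  have hφC (i : X) (n : ℕ) : 1 ≤ (φ i n)⁻¹ := ENNReal.one_le_inv.2 (hφ₁ i n)
  let g (i : X) (n : ℕ) (x : ℝ) : ℝ≥0∞ := if n < N i then f i n x * (φ i n)⁻¹ else 1
  have hgmeas (i : X) (n : ℕ) : Measurable (g i n) := by
    by_cases hn : n < N i <;> simp only [g, hn, if_true, if_false]
    exacts [(hf i n).mul_const _, measurable_const]
  have hgmean (i : X) (n : ℕ) : ∫⁻ ω, g i n (κ 1 ω) ∂P i = 1 := by
    by_cases hn : n < N i <;> simp only [g, hn, if_true, if_false]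
    · rw [lintegral_mul_const' _ _ (hφinv i n), hφ]
      exact ENNReal.mul_inv_cancel (hφ₀ i n) (ne_top_of_le_ne_top ENNReal.one_ne_top (hφ₁ i n))
    · rw [lintegral_one, measure_univ]
  have hgle (i : X) (n : ℕ) (x : ℝ) (hx : 0 ≤ x) : g i n x ≤ (φ i n)⁻¹ := by
    by_cases hn : n < N i <;> simp only [g, hn, if_true, if_false]
    exacts [mul_le_of_le_one_left' (hf₁ i n x hx), hφC i n]
  have hg := H.lintegral_prod_visits_of_mean_one hirr hgmeas hgmean
    (fun i n hn x => if_neg hn.not_gt) hφC hφinv hgle i₀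
  rw [← hg]
  refine lintegral_congr fun ω => Finset.prod_congr rfl fun i _ => Finset.prod_congr rfl ?_
  exact fun n hn => (if_pos (Finset.mem_range.1 hn)).symm

lemma lintegral_prod_visits (H : IsMarkovRenewal P η κ)
    (hirr : ∀ i j, Relation.ReflTransGen (fun a b => P a {ω | η 1 ω = b} ≠ 0) i j)
    (hf : ∀ i n, Measurable (f i n)) (hf₁ : ∀ i n x, 0 ≤ x → f i n x ≤ 1)
    (hf₀ : ∀ i n, ∫⁻ ω, f i n (κ 1 ω) ∂P i ≠ 0) (N : X → ℕ) (i₀ : X) :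
    ∫⁻ ω, ∏ i, ∏ n ∈ Finset.range (N i), f i n (κ (Nat.nth (fun l => η l ω = i) n + 1) ω) ∂P i₀ =
      ∏ i, ∏ n ∈ Finset.range (N i), ∫⁻ ω, f i n (κ 1 ω) ∂P i := by
  have := H.isProbabilityMeasure
  set φ : X → ℕ → ℝ≥0∞ := fun i n => ∫⁻ ω, f i n (κ 1 ω) ∂P i
  have hφ₁ (i : X) (n : ℕ) : φ i n ≤ 1 :=
    (lintegral_mono fun ω => hf₁ i n _ (H.sojourn_nonneg 1 ω)).trans_eq (by simp)
  have hinv : (∏ i, ∏ n ∈ Finset.range (N i), (φ i n)⁻¹) *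
      ∏ i, ∏ n ∈ Finset.range (N i), φ i n = 1 := by
    simp only [← Finset.prod_mul_distrib]
    exact Finset.prod_eq_one fun i _ => Finset.prod_eq_one fun n _ =>
      ENNReal.inv_mul_cancel (hf₀ i n) (ne_top_of_le_ne_top ENNReal.one_ne_top (hφ₁ i n))
  have h := H.lintegral_prod_visits_mul_inv hirr hf hf₁ (fun _ _ => rfl) hf₀ hφ₁ N i₀
  simp only [Finset.prod_mul_distrib] at h
  rw [lintegral_mul_const' _ _ (ENNReal.prod_ne_top fun i _ => ENNReal.prod_ne_top fun n _ =>
    ENNReal.inv_ne_top.2 (hf₀ i n))] at h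
  rw [← mul_one (∫⁻ _, _ ∂_), ← hinv, ← mul_assoc, h, one_mul]

end IsMarkovRenewal

end Visits

section HittingTimes

variable {m : ℕ}

lemma hitTimes_eq_nth {e : ℕ → Fin m} {i : Fin m} (he : ∃ᶠ k in atTop, e k = i) (n : ℕ) :
    hitTimes e i n = Nat.nth (fun k => e k = i) n := by
  have hmono := Nat.nth_monotone (Nat.frequently_atTop_iff_infinite.1 he)
  induction n with
  | zero => rw [hitTimes, Nat.nth_zero]
  | succ n ih =>
    rw [hitTimes, ih, Nat.nth_eq_sInf _ (n + 1)]
    congr 1 with k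
    exact ⟨fun ⟨hn, hk⟩ => ⟨hk, fun l hl => (hmono (Nat.lt_succ_iff.1 hl)).trans_lt hn⟩,
      fun ⟨hk, hn⟩ => ⟨hn n n.lt_succ_self, hk⟩⟩

lemma sInf_lt_eq_of_mem_Ico {a : ℕ → ℕ} {R : ℕ} (hmono : ∀ r < R, a r ≤ a (r + 1)) {r n : ℕ}
    (hr : r < R) (hn : n ∈ Finset.Ico (a r) (a (r + 1))) : sInf {q | n < a (q + 1)} = r := by
  rw [Finset.mem_Ico] at hn
  have hmonoOn : MonotoneOn a (Iic R) :=
    monotoneOn_of_le_add_one ordConnected_Iic fun r _ _ hr => hmono r (Nat.lt_of_succ_le hr)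
  refine IsLeast.csInf_eq ⟨hn.2, fun q hq => ?_⟩
  by_contra! hqr
  exact ((hmonoOn (hqr.trans hr) hr.le hqr).trans hn.1).not_gt hq

variable {Ω : Type} [MeasurableSpace Ω] {P : Fin m → Measure Ω} {η : ℕ → Ω → Fin m}
  {κ : ℕ → Ω → ℝ}

lemma measurable_hitTimes (hη : ∀ n, Measurable (η n)) (i : Fin m) (n : ℕ) :
    Measurable fun ω => hitTimes (fun k => η k ω) i n := by
  have hstate (k : ℕ) : MeasurableSet {ω | η k ω = i} := hη k (measurableSet_singleton i)
  induction n with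
  | zero => exact measurable_sInf_nat hstate
  | succ n ih =>
    exact measurable_sInf_nat fun k => (measurableSet_lt ih measurable_const).inter (hstate k)

lemma measurable_kHit (hη : ∀ n, Measurable (η n)) (hκ : ∀ n, Measurable (κ n)) (i : Fin m)
    (n : ℕ) : Measurable (kHit η κ i n) := by
  have hκ' : Measurable fun x : ℕ × Ω => κ (x.1 + 1) x.2 :=
    measurable_from_prod_countable_right fun k => hκ (k + 1)
  exact hκ'.comp ((measurable_hitTimes hη i n).prodMk measurable_id)

namespace IsMarkovRenewal

lemma integral_exp_neg_sum_kHit (H : IsMarkovRenewal P η κ)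
    (hirr : ∀ i j, Relation.ReflTransGen (fun a b => P a {ω | η 1 ω = b} ≠ 0) i j)
    {s : Fin m → ℕ → ℝ} (hs : ∀ i n, 0 ≤ s i n) (N : Fin m → ℕ) (i₀ : Fin m) :
    ∫ ω, Real.exp (-∑ i, ∑ n ∈ Finset.range (N i), s i n * kHit η κ i n ω) ∂P i₀ =
      ∏ i, ∏ n ∈ Finset.range (N i), mgf (κ 1) (P i) (-s i n) := by
  have := H.isProbabilityMeasure
  let f (i : Fin m) (n : ℕ) (x : ℝ) : ℝ≥0∞ := ENNReal.ofReal (Real.exp (-s i n * x))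
  have hint (i : Fin m) (n : ℕ) : Integrable (fun ω => Real.exp (-s i n * κ 1 ω)) (P i) :=
    integrable_exp_neg_mul (H.measurable_sojourn 1).aemeasurable
      (.of_forall (H.sojourn_nonneg 1)) (hs i n)
  have hmgf (i : Fin m) (n : ℕ) :
      ∫⁻ ω, f i n (κ 1 ω) ∂P i = ENNReal.ofReal (mgf (κ 1) (P i) (-s i n)) :=
    (ofReal_integral_eq_lintegral_ofReal (hint i n) (.of_forall fun _ => (Real.exp_pos _).le)).symm
  have hvisits := H.lintegral_prod_visits hirr (f := f) (fun i n => by fun_prop)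
    (fun i n x hx => ENNReal.ofReal_le_one.2 (exp_neg_mul_le_one (hs i n) hx))
    (fun i n => by
      rw [hmgf]
      exact (ENNReal.ofReal_pos.2 (ProbabilityTheory.mgf_pos (hint i n))).ne') N i₀
  have hexp : ∀ᵐ ω ∂P i₀, ENNReal.ofReal
      (Real.exp (-∑ i, ∑ n ∈ Finset.range (N i), s i n * kHit η κ i n ω)) =
        ∏ i, ∏ n ∈ Finset.range (N i), f i n (κ (Nat.nth (fun l => η l ω = i) n + 1) ω) := by
    filter_upwards [H.ae_frequently_eq hirr i₀] with ω hω
    simp only [f, ← Finset.sum_neg_distrib, ← neg_mul, Real.exp_sum, kHit, hitTimes_eq_nth (hω _)]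
    rw [ENNReal.ofReal_prod_of_nonneg fun i _ => Finset.prod_nonneg fun n _ => (Real.exp_pos _).le]
    exact Finset.prod_congr rfl fun i _ =>
      ENNReal.ofReal_prod_of_nonneg fun n _ => (Real.exp_pos _).le
  have hmeas : Measurable fun ω =>
      Real.exp (-∑ i, ∑ n ∈ Finset.range (N i), s i n * kHit η κ i n ω) := by
    have := measurable_kHit H.measurable_state H.measurable_sojourn
    fun_prop
  rw [integral_eq_lintegral_of_nonneg_ae (.of_forall fun _ => (Real.exp_pos _).le)
    hmeas.aestronglyMeasurable, lintegral_congr_ae hexp, hvisits]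
  simp only [hmgf, ENNReal.toReal_prod, ENNReal.toReal_ofReal ProbabilityTheory.mgf_nonneg]

lemma integral_exp_neg_sum_increments (H : IsMarkovRenewal P η κ)
    (hirr : ∀ i j, Relation.ReflTransGen (fun a b => P a {ω | η 1 ω = b} ≠ 0) i j)
    {a : Fin m → ℕ → ℕ} (ha : ∀ i, a i 0 = 0) {R : ℕ} (hmono : ∀ i, ∀ r < R, a i r ≤ a i (r + 1))
    {s : ℕ → ℝ} (hs : ∀ r, 0 ≤ s r) (i₀ : Fin m) :
    ∫ ω, Real.exp (-∑ r ∈ Finset.range R, s r *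
        ∑ i, ∑ n ∈ Finset.Ico (a i r) (a i (r + 1)), kHit η κ i n ω) ∂P i₀ =
      ∏ r ∈ Finset.range R, ∏ i, mgf (κ 1) (P i) (-s r) ^ (a i (r + 1) - a i r) := by
  let σ (i : Fin m) (n : ℕ) : ℝ := s (sInf {q | n < a i (q + 1)})
  have hσ (i : Fin m) {r n : ℕ} (hr : r ∈ Finset.range R)
      (hn : n ∈ Finset.Ico (a i r) (a i (r + 1))) : σ i n = s r :=
    congrArg s (sInf_lt_eq_of_mem_Ico (hmono i) (Finset.mem_range.1 hr) hn)
  convert H.integral_exp_neg_sum_kHit hirr (s := σ) (fun i n => hs _) (fun i => a i R) i₀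
    using 1
  · refine integral_congr_ae (.of_forall fun ω => congrArg (Real.exp <| -·) ?_)
    simp only [sum_range_eq_sum_sum_Ico _ (ha _) (hmono _), Finset.mul_sum]
    rw [Finset.sum_comm]
    refine Finset.sum_congr rfl fun i _ => Finset.sum_congr rfl fun r hr =>
      Finset.sum_congr rfl fun n hn => ?_
    rw [hσ i hr hn]
  · simp only [prod_range_eq_prod_prod_Ico _ (ha _) (hmono _)]
    rw [Finset.prod_comm]
    refine Finset.prod_congr rfl fun i _ => Finset.prod_congr rfl fun r hr => ?_
    rw [Finset.prod_congr rfl fun n hn => by rw [hσ i hr hn], Finset.prod_const, Nat.card_Ico]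

end IsMarkovRenewal

end HittingTimes

section Mixture

variable {ι Ω : Type*} [Fintype ι] [MeasurableSpace Ω] {P : ι → Measure Ω} {q : ι → ℝ}

lemma isProbabilityMeasure_sum_ofReal_smul [∀ i, IsProbabilityMeasure (P i)] (hq₀ : ∀ i, 0 ≤ q i)
    (hq₁ : ∑ i, q i = 1) : IsProbabilityMeasure (∑ i, ENNReal.ofReal (q i) • P i) where
  measure_univ := by
    simp only [Measure.coe_finsetSum, Finset.sum_apply, Measure.smul_apply, measure_univ,
      smul_eq_mul, mul_one]
    rw [← ENNReal.ofReal_sum_of_nonneg fun i _ => hq₀ i, hq₁, ENNReal.ofReal_one]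

lemma integral_sum_ofReal_smul (hq₀ : ∀ i, 0 ≤ q i) {f : Ω → ℝ} (hf : ∀ i, Integrable f (P i)) :
    ∫ ω, f ω ∂(∑ i, ENNReal.ofReal (q i) • P i) = ∑ i, q i * ∫ ω, f ω ∂P i := by
  rw [integral_finsetSum_measure fun i _ => (hf i).smul_measure ENNReal.ofReal_ne_top]
  simp only [integral_smul_measure, ENNReal.toReal_ofReal (hq₀ _), smul_eq_mul]

end Mixture

section StationaryDistribution

variable {α : Type*} {l : Filter α} {m : ℕ} {p : α → Fin m → Fin m → ℝ} {π : α → Fin m → ℝ}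

lemma exists_pos_eventually_le_of_liminf_pos {f : α → ℝ} (hf : ∀ᶠ a in l, 0 ≤ f a)
    (h : 0 < liminf f l) : ∃ δ > 0, ∀ᶠ a in l, δ ≤ f a :=
  ⟨liminf f l / 2, half_pos h,
    (eventually_lt_of_lt_liminf (half_lt_self h) (isBoundedUnder_of_eventually_ge hf)).mono
      fun _ => le_of_lt⟩

lemma CondB.reflTransGen {p : ℝ → Fin m → Fin m → ℝ} (hp : CondB p) (i j : Fin m) :
    Relation.ReflTransGen (fun a b => 0 < liminf (fun ε => p ε a b) (𝓝[>] 0)) i j := by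
  obtain ⟨N, -, c, hc, hsurj, hpos⟩ := hp
  have hforward {k k' : ℕ} (hkk' : k ≤ k') (hk' : k' ≤ N) :
      Relation.ReflTransGen (fun a b => 0 < liminf (fun ε => p ε a b) (𝓝[>] 0)) (c k) (c k') := by
    induction k', hkk' using Nat.le_induction with
    | base => exact .refl
    | succ k' _ ih => exact (ih (by omega)).tail (hpos k' hk')
  obtain ⟨k, hk, rfl⟩ := hsurj i
  obtain ⟨k', hk', rfl⟩ := hsurj j
  have hreturn := hforward hk le_rfl
  rw [hc] at hreturn
  exact hreturn.trans (hforward k'.zero_le hk')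

lemma exists_pos_eventually_mul_le_of_reflTransGen (hp : ∀ᶠ a in l, ∀ i j, 0 ≤ p a i j)
    (hπ : ∀ᶠ a in l, IsStationaryDist (p a) (π a)) {i j : Fin m}
    (hij : Relation.ReflTransGen (fun b c => 0 < liminf (fun a => p a b c) l) i j) :
    ∃ δ > 0, ∀ᶠ a in l, δ * π a i ≤ π a j := by
  induction hij with
  | refl => exact ⟨1, one_pos, .of_forall fun a => (one_mul _).le⟩
  | @tail j k _ hjk ih =>
    obtain ⟨δ, hδ, hle⟩ := ih
    obtain ⟨δ', hδ', hle'⟩ :=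
      exists_pos_eventually_le_of_liminf_pos (hp.mono fun a ha => ha j k) hjk
    refine ⟨δ * δ', mul_pos hδ hδ', ?_⟩
    filter_upwards [hle, hle', hp, hπ] with a hle hle' hp hπ
    calc δ * δ' * π a i = δ * π a i * δ' := by ring
      _ ≤ π a j * p a j k := mul_le_mul hle hle' hδ'.le (hπ.1 j)
      _ ≤ ∑ b, π a b * p a b k := Finset.single_le_sum
          (f := fun b => π a b * p a b k) (fun b _ => mul_nonneg (hπ.1 b) (hp b k))
          (Finset.mem_univ j)
      _ = π a k := (hπ.2.2 k).symm

lemma exists_pos_eventually_le_of_isStationaryDist (hp : ∀ᶠ a in l, ∀ i j, 0 ≤ p a i j)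
    (hπ : ∀ᶠ a in l, IsStationaryDist (p a) (π a))
    (hirr : ∀ i j, Relation.ReflTransGen (fun b c => 0 < liminf (fun a => p a b c) l) i j)
    (j : Fin m) : ∃ δ > 0, ∀ᶠ a in l, δ ≤ π a j := by
  choose δ hδ hle using fun i => exists_pos_eventually_mul_le_of_reflTransGen hp hπ (hirr i j)
  have : Nonempty (Fin m) := ⟨j⟩
  obtain ⟨i₀, hi₀⟩ := Finite.exists_min δ
  refine ⟨δ i₀ / m, div_pos (hδ i₀) (Nat.cast_pos.2 j.pos), ?_⟩
  filter_upwards [eventually_all.2 hle, hπ] with a hle hπ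
  rw [div_le_iff₀' (Nat.cast_pos.2 j.pos)]
  calc δ i₀ = ∑ i, δ i₀ * π a i := by rw [← Finset.mul_sum, hπ.2.1, mul_one]
    _ ≤ ∑ _i : Fin m, π a j := Finset.sum_le_sum fun i _ =>
        (mul_le_mul_of_nonneg_right (hi₀ i) (hπ.1 i)).trans (hle i)
    _ = m * π a j := by simp

lemma eventually_reflTransGen_of_liminf_pos (hp : ∀ᶠ a in l, ∀ i j, 0 ≤ p a i j)
    (hirr : ∀ i j, Relation.ReflTransGen (fun b c => 0 < liminf (fun a => p a b c) l) i j) :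
    ∀ᶠ a in l, ∀ i j, Relation.ReflTransGen (fun b c => 0 < p a b c) i j := by
  have hpos : ∀ᶠ a in l, ∀ b c, 0 < liminf (fun a => p a b c) l → 0 < p a b c := by
    simp only [eventually_all]
    intro b c hbc
    obtain ⟨δ, hδ, hle⟩ :=
      exists_pos_eventually_le_of_liminf_pos (hp.mono fun a ha => ha b c) hbc
    exact hle.mono fun a => hδ.trans_le
  exact hpos.mono fun a ha i j => Relation.ReflTransGen.mono ha i j (hirr i j)

end StationaryDistribution

section RenewalArray

variable {m : ℕ}

lemma kTil_sub_kTil {Ω : Type} {η : ℝ → ℕ → Ω → Fin m} {κ : ℝ → ℕ → Ω → ℝ}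
    {π : ℝ → Fin m → ℝ} {v : ℝ → ℝ} {ε t t' : ℝ}
    (h : ∀ i, ⌊t * (π ε i * v ε)⌋₊ ≤ ⌊t' * (π ε i * v ε)⌋₊) (ω : Ω) :
    kTil η κ π v ε t' ω - kTil η κ π v ε t ω =
      ∑ i, ∑ n ∈ Finset.Ico ⌊t * (π ε i * v ε)⌋₊ ⌊t' * (π ε i * v ε)⌋₊,
        kHit (η ε) (κ ε) i n ω := by
  rw [kTil, kTil, ← Finset.sum_sub_distrib]
  exact Finset.sum_congr rfl fun i _ => (Finset.sum_Ico_eq_sub _ (h i)).symm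

variable {Ω : Type} [MeasurableSpace Ω] {P : ℝ → Fin m → Measure Ω} {η : ℝ → ℕ → Ω → Fin m}
  {κ : ℝ → ℕ → Ω → ℝ} {π : ℝ → Fin m → ℝ} {v : ℝ → ℝ} {Pq : ℝ → Measure Ω}

namespace IsMarkovRenewal

variable {ε : ℝ}

lemma measurable_kTil (H : IsMarkovRenewal (P ε) (η ε) (κ ε)) (t : ℝ) :
    Measurable (kTil η κ π v ε t) := by
  have := measurable_kHit H.measurable_state H.measurable_sojourn
  unfold kTil
  fun_prop

lemma kTil_nonneg (H : IsMarkovRenewal (P ε) (η ε) (κ ε)) (t : ℝ) (ω : Ω) :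
    0 ≤ kTil η κ π v ε t ω :=
  Finset.sum_nonneg fun _ _ => Finset.sum_nonneg fun _ _ => H.sojourn_nonneg _ _

lemma integral_exp_neg_sum_kTil_increments (H : IsMarkovRenewal (P ε) (η ε) (κ ε))
    (hirr : ∀ i j, Relation.ReflTransGen (fun a b => P ε a {ω | η ε 1 ω = b} ≠ 0) i j)
    (hrate : ∀ i, 0 ≤ π ε i * v ε) {n : ℕ} {t : ℕ → ℝ} (ht₀ : t 0 = 0)
    (ht : ∀ r < n, t r ≤ t (r + 1)) {s : ℕ → ℝ} (hs : ∀ r, 0 ≤ s r) {q : Fin m → ℝ}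
    (hq₀ : ∀ i, 0 ≤ q i) (hq₁ : ∑ i, q i = 1) :
    ∫ ω, Real.exp (-∑ r ∈ Finset.range n,
        s r * (kTil η κ π v ε (t (r + 1)) ω - kTil η κ π v ε (t r) ω))
          ∂(∑ i, ENNReal.ofReal (q i) • P ε i) =
      ∏ r ∈ Finset.range n, ∏ i, mgf (κ ε 1) (P ε i) (-s r) ^
        (⌊t (r + 1) * (π ε i * v ε)⌋₊ - ⌊t r * (π ε i * v ε)⌋₊) := by
  have := H.isProbabilityMeasure
  have hmono (i : Fin m) (r : ℕ) (hr : r < n) :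
      ⌊t r * (π ε i * v ε)⌋₊ ≤ ⌊t (r + 1) * (π ε i * v ε)⌋₊ :=
    Nat.floor_le_floor (mul_le_mul_of_nonneg_right (ht r hr) (hrate i))
  have hsum (ω : Ω) : ∑ r ∈ Finset.range n,
      s r * (kTil η κ π v ε (t (r + 1)) ω - kTil η κ π v ε (t r) ω) =
        ∑ r ∈ Finset.range n, s r *
          ∑ i, ∑ n ∈ Finset.Ico ⌊t r * (π ε i * v ε)⌋₊ ⌊t (r + 1) * (π ε i * v ε)⌋₊,
            kHit (η ε) (κ ε) i n ω :=
    Finset.sum_congr rfl fun r hr => by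
      rw [kTil_sub_kTil fun i => hmono i r (Finset.mem_range.1 hr)]
  have hint (i : Fin m) : Integrable (fun ω => Real.exp (-∑ r ∈ Finset.range n,
      s r * (kTil η κ π v ε (t (r + 1)) ω - kTil η κ π v ε (t r) ω))) (P ε i) := by
    refine .of_bound (Measurable.aestronglyMeasurable ?_) 1 (.of_forall fun ω => ?_)
    · have := H.measurable_kTil (π := π) (v := v)
      fun_prop
    · rw [hsum]
      exact norm_exp_le_one <| neg_nonpos.2 <| Finset.sum_nonneg fun r _ =>
        mul_nonneg (hs r) <| Finset.sum_nonneg fun _ _ => Finset.sum_nonneg fun _ _ =>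
          H.sojourn_nonneg _ _
  rw [integral_sum_ofReal_smul hq₀ hint]
  simp only [hsum, H.integral_exp_neg_sum_increments hirr (fun i => by simp [ht₀]) hmono hs,
    ← Finset.sum_mul, hq₁, one_mul]

end IsMarkovRenewal

lemma ae_nonneg_iff_measure_Iio_eq_zero {μ : Measure ℝ} :
    (∀ᵐ x ∂μ, 0 ≤ x) ↔ μ (Iio 0) = 0 := by
  simp only [ae_iff, not_le, Iio_def]

lemma integral_exp_neg_mul_eq_mgf {μ : Measure Ω} {X : Ω → ℝ} (s : ℝ) :
    ∫ ω, Real.exp (-(s * X ω)) ∂μ = mgf X μ (-s) := by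
  simp only [mgf, neg_mul]

/-- A family of Markov renewal processes whose parameter runs along a filter `l`: eventually the
embedded chain is irreducible and the initial law `Pq` is a mixture of the laws started at a state,
and the number of visits to each state entering `kTil` at a fixed time tends to infinity. -/
structure IsRenewalArray (l : Filter ℝ) (P : ℝ → Fin m → Measure Ω) (η : ℝ → ℕ → Ω → Fin m)
    (κ : ℝ → ℕ → Ω → ℝ) (π : ℝ → Fin m → ℝ) (v : ℝ → ℝ) (Pq : ℝ → Measure Ω) : Prop where
  isMarkovRenewal : ∀ᶠ ε in l, IsMarkovRenewal (P ε) (η ε) (κ ε)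
  irreducible : ∀ᶠ ε in l, ∀ i j,
    Relation.ReflTransGen (fun a b => P ε a {ω | η ε 1 ω = b} ≠ 0) i j
  sum_weight : ∀ᶠ ε in l, ∑ i, π ε i = 1
  tendsto_rate : ∀ i, Tendsto (fun ε => π ε i * v ε) l atTop
  mixture : ∀ᶠ ε in l, ∃ q : Fin m → ℝ, (∀ i, 0 ≤ q i) ∧ ∑ i, q i = 1 ∧
    Pq ε = ∑ i, ENNReal.ofReal (q i) • P ε i

namespace IsRenewalArray

variable {l : Filter ℝ}

lemma isProbabilityMeasure (H : IsRenewalArray l P η κ π v Pq) :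
    ∀ᶠ ε in l, IsProbabilityMeasure (Pq ε) := by
  filter_upwards [H.isMarkovRenewal, H.mixture] with ε hM ⟨q, hq₀, hq₁, hq⟩
  have := hM.isProbabilityMeasure
  rw [hq]
  exact isProbabilityMeasure_sum_ofReal_smul hq₀ hq₁

lemma mgf_sojourn_mem_Ioc (H : IsRenewalArray l P η κ π v Pq) {s : ℝ} (hs : 0 ≤ s) :
    ∀ᶠ ε in l, ∀ i, mgf (κ ε 1) (P ε i) (-s) ∈ Ioc 0 1 := by
  filter_upwards [H.isMarkovRenewal] with ε hM i
  have := hM.isProbabilityMeasure i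
  have hκm := (hM.measurable_sojourn 1).aemeasurable (μ := P ε i)
  have hκ : ∀ᵐ ω ∂P ε i, 0 ≤ κ ε 1 ω := .of_forall (hM.sojourn_nonneg 1)
  exact ⟨ProbabilityTheory.mgf_pos (integrable_exp_neg_mul hκm hκ hs), mgf_neg_le_one hκm hκ hs⟩

lemma mul_one_sub_lapPhi_eventuallyEq (H : IsRenewalArray l P η κ π v Pq) (s : ℝ) :
    (fun ε => v ε * (1 - lapPhi P κ π ε s)) =ᶠ[l]
      fun ε => ∑ i, π ε i * v ε * (1 - mgf (κ ε 1) (P ε i) (-s)) := by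
  filter_upwards [H.sum_weight] with ε hπ
  simp only [lapPhi, integral_exp_neg_mul_eq_mgf, mul_sub, mul_one, Finset.sum_sub_distrib,
    ← Finset.sum_mul, hπ, one_mul, Finset.mul_sum]
  exact congrArg _ (Finset.sum_congr rfl fun i _ => by ring)

lemma integral_exp_neg_sum_kTil_increments (H : IsRenewalArray l P η κ π v Pq) {n : ℕ}
    {t : ℕ → ℝ} (ht₀ : t 0 = 0) (ht : ∀ r < n, t r ≤ t (r + 1)) {s : ℕ → ℝ} (hs : ∀ r, 0 ≤ s r) :
    ∀ᶠ ε in l, ∫ ω, Real.exp (-∑ r ∈ Finset.range n,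
        s r * (kTil η κ π v ε (t (r + 1)) ω - kTil η κ π v ε (t r) ω)) ∂Pq ε =
      ∏ r ∈ Finset.range n, ∏ i, mgf (κ ε 1) (P ε i) (-s r) ^
        (⌊t (r + 1) * (π ε i * v ε)⌋₊ - ⌊t r * (π ε i * v ε)⌋₊) := by
  filter_upwards [H.isMarkovRenewal, H.irreducible, H.mixture,
    eventually_all.2 fun i => (H.tendsto_rate i).eventually_ge_atTop 0]
    with ε hM hirr ⟨q, hq₀, hq₁, hq⟩ hrate
  rw [hq]
  exact hM.integral_exp_neg_sum_kTil_increments hirr hrate ht₀ ht hs hq₀ hq₁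

lemma mgf_kTil_one (H : IsRenewalArray l P η κ π v Pq) {s : ℝ} (hs : 0 ≤ s) :
    ∀ᶠ ε in l, mgf (kTil η κ π v ε 1) (Pq ε) (-s) =
      ∏ i, mgf (κ ε 1) (P ε i) (-s) ^ ⌊π ε i * v ε⌋₊ := by
  filter_upwards [H.integral_exp_neg_sum_kTil_increments (n := 1) (t := fun r => r)
    Nat.cast_zero (by simp) fun _ => hs] with ε h
  simpa [kTil, mgf] using h

theorem tendsto_integral_exp_neg_sum_kTil_increments (H : IsRenewalArray l P η κ π v Pq)
    {n : ℕ} {t : ℕ → ℝ} (ht₀ : t 0 = 0) (ht : ∀ r < n, t r ≤ t (r + 1)) {s b : ℕ → ℝ}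
    (hs : ∀ r, 0 ≤ s r)
    (hb : ∀ r, Tendsto (fun ε => v ε * (1 - lapPhi P κ π ε (s r))) l (𝓝 (b r))) :
    Tendsto (fun ε => ∫ ω, Real.exp (-∑ r ∈ Finset.range n,
        s r * (kTil η κ π v ε (t (r + 1)) ω - kTil η κ π v ε (t r) ω)) ∂Pq ε) l
      (𝓝 (Real.exp (-∑ r ∈ Finset.range n, b r * (t (r + 1) - t r)))) := by
  have ht' : MonotoneOn t (Iic n) :=
    monotoneOn_of_le_add_one ordConnected_Iic fun r _ _ hr => ht r (Nat.lt_of_succ_le hr)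
  rw [← Finset.sum_neg_distrib, Real.exp_sum,
    tendsto_congr' (H.integral_exp_neg_sum_kTil_increments ht₀ ht hs)]
  refine tendsto_finsetProd _ fun r hr => ?_
  have hrn := Finset.mem_range.1 hr
  have htr : 0 ≤ t r := ht₀ ▸ ht' n.zero_le hrn.le r.zero_le
  exact tendsto_prod_pow_floor_sub_floor (H.mgf_sojourn_mem_Ioc (hs r)) H.tendsto_rate htr
    (ht r hrn) ((hb r).congr' (H.mul_one_sub_lapPhi_eventuallyEq (s r)))

lemma tendsto_mgf_kTil_one (H : IsRenewalArray l P η κ π v Pq) {s b : ℝ} (hs : 0 ≤ s)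
    (hb : Tendsto (fun ε => v ε * (1 - lapPhi P κ π ε s)) l (𝓝 b)) :
    Tendsto (fun ε => mgf (kTil η κ π v ε 1) (Pq ε) (-s)) l (𝓝 (Real.exp (-b))) := by
  rw [tendsto_congr' (H.mgf_kTil_one hs)]
  simpa using tendsto_prod_pow_floor_sub_floor (H.mgf_sojourn_mem_Ioc hs) H.tendsto_rate
    le_rfl zero_le_one (hb.congr' (H.mul_one_sub_lapPhi_eventuallyEq s))

lemma tendsto_mul_one_sub_lapPhi (H : IsRenewalArray l P η κ π v Pq) {s b : ℝ} (hs : 0 ≤ s)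
    (hb : 0 < b) (h : Tendsto (fun ε => mgf (kTil η κ π v ε 1) (Pq ε) (-s)) l (𝓝 b)) :
    Tendsto (fun ε => v ε * (1 - lapPhi P κ π ε s)) l (𝓝 (-Real.log b)) := by
  rw [tendsto_congr' (H.mul_one_sub_lapPhi_eventuallyEq s)]
  exact tendsto_sum_mul_one_sub_of_prod_pow_floor (H.mgf_sojourn_mem_Ioc hs) H.tendsto_rate hb
    (h.congr' (H.mgf_kTil_one hs))

lemma tendsto_mul_one_sub_lapPhi_of_nonneg (H : IsRenewalArray l P η κ π v Pq) {A : ℝ → ℝ}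
    (hA : ∀ s > 0, Tendsto (fun ε => v ε * (1 - lapPhi P κ π ε s)) l (𝓝 (A s))) (hA_zero : A 0 = 0)
    {s : ℝ} (hs : 0 ≤ s) : Tendsto (fun ε => v ε * (1 - lapPhi P κ π ε s)) l (𝓝 (A s)) := by
  obtain rfl | hs := hs.eq_or_lt
  · rw [tendsto_congr' (H.mul_one_sub_lapPhi_eventuallyEq 0), hA_zero]
    refine tendsto_const_nhds.congr' ?_
    filter_upwards [H.isMarkovRenewal] with ε hM
    have := hM.isProbabilityMeasure
    simp
  · exact hA s hs

theorem exists_tendsto_mgf_kTil_one [l.NeBot] (H : IsRenewalArray l P η κ π v Pq) {A : ℝ → ℝ}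
    (hA : ∀ s > 0, Tendsto (fun ε => v ε * (1 - lapPhi P κ π ε s)) l (𝓝 (A s)))
    (hA_pos : ∀ s > 0, 0 < A s) (hA_zero : Tendsto A (𝓝[>] 0) (𝓝 0)) :
    ∃ μ : Measure ℝ, IsProbabilityMeasure μ ∧ μ (Iio 0) = 0 ∧ μ {0} < 1 ∧ ∀ s > 0,
      Tendsto (fun ε => mgf (kTil η κ π v ε 1) (Pq ε) (-s)) l (𝓝 (mgf id μ (-s))) := by
  have hlim (s : ℝ) (hs : s > 0) := H.tendsto_mgf_kTil_one hs.le (hA s hs)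
  obtain ⟨μ, hμ, hμ₀, hμA⟩ := exists_mgf_neg_eq_of_tendsto H.isProbabilityMeasure
    (H.isMarkovRenewal.mono fun ε hM => (hM.measurable_kTil 1).aemeasurable)
    (H.isMarkovRenewal.mono fun ε hM => .of_forall (hM.kTil_nonneg 1)) hlim
    (by simpa using hA_zero.neg.rexp)
  refine ⟨μ, hμ, ?_, ?_, fun s hs => hμA s hs ▸ hlim s hs⟩
  · exact ae_nonneg_iff_measure_Iio_eq_zero.1 hμ₀
  · have hlt : mgf id μ (-1) < 1 := by
      rw [hμA 1 one_pos, Real.exp_lt_one_iff]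
      exact neg_neg_of_pos (hA_pos 1 one_pos)
    refine prob_le_one.lt_of_ne fun h => ?_
    exact (mgf_neg_lt_one_iff aemeasurable_id hμ₀ one_pos).1 hlt
      ((mem_ae_iff_prob_eq_one (measurableSet_singleton 0)).2 h)

theorem exists_tendsto_mul_one_sub_lapPhi (H : IsRenewalArray l P η κ π v Pq) {μ : Measure ℝ}
    [IsProbabilityMeasure μ] (hμ : μ (Iio 0) = 0) (hμ' : μ {0} < 1)
    (h : ∀ s > 0,
      Tendsto (fun ε => mgf (kTil η κ π v ε 1) (Pq ε) (-s)) l (𝓝 (mgf id μ (-s)))) :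
    ∃ A : ℝ → ℝ, (∀ s > 0, Tendsto (fun ε => v ε * (1 - lapPhi P κ π ε s)) l (𝓝 (A s))) ∧
      (∀ s > 0, 0 < A s) ∧ Tendsto A (𝓝[>] 0) (𝓝 0) := by
  have hμ₀ : ∀ᵐ x ∂μ, 0 ≤ x := ae_nonneg_iff_measure_Iio_eq_zero.2 hμ
  have hne : ¬ ∀ᵐ x ∂μ, x = 0 := fun h =>
    hμ'.ne ((mem_ae_iff_prob_eq_one (measurableSet_singleton 0)).1 h)
  have hpos (s : ℝ) (hs : s > 0) : 0 < mgf id μ (-s) :=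
    ProbabilityTheory.mgf_pos (integrable_exp_neg_mul aemeasurable_id hμ₀ hs.le)
  refine ⟨fun s => -Real.log (mgf id μ (-s)), fun s hs => ?_, fun s hs => ?_, ?_⟩
  · exact H.tendsto_mul_one_sub_lapPhi hs.le (hpos s hs) (h s hs)
  · exact neg_pos.2 <| Real.log_neg (hpos s hs) <|
      (mgf_neg_lt_one_iff aemeasurable_id hμ₀ hs).2 hne
  · simpa using ((tendsto_mgf_neg_one aemeasurable_id hμ₀).log one_ne_zero).neg

lemma of_condB {p : ℝ → Fin m → Fin m → ℝ}
    (hM : ∀ᶠ ε in 𝓝[>] 0, IsMarkovRenewal (P ε) (η ε) (κ ε))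
    (hp : ∀ᶠ ε in 𝓝[>] 0, ∀ i j, p ε i j = (P ε i {ω | η ε 1 ω = j}).toReal) (hB : CondB p)
    (hπ : ∀ᶠ ε in 𝓝[>] 0, IsStationaryDist (p ε) (π ε)) (hv : Tendsto v (𝓝[>] 0) atTop)
    (hPq : ∀ᶠ ε in 𝓝[>] 0, ∃ q : Fin m → ℝ, (∀ i, 0 ≤ q i) ∧ ∑ i, q i = 1 ∧
      Pq ε = ∑ i, ENNReal.ofReal (q i) • P ε i) :
    IsRenewalArray (𝓝[>] 0) P η κ π v Pq := by
  have hp₀ : ∀ᶠ ε in 𝓝[>] 0, ∀ i j, 0 ≤ p ε i j :=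
    hp.mono fun ε h i j => h i j ▸ ENNReal.toReal_nonneg
  refine ⟨hM, ?_, hπ.mono fun ε h => h.2.1, fun i => ?_, hPq⟩
  · filter_upwards [hp, eventually_reflTransGen_of_liminf_pos hp₀ hB.reflTransGen]
      with ε hp hirr i j
    refine Relation.ReflTransGen.mono (fun a b hab h => ?_) i j (hirr i j)
    rw [hp, h] at hab
    exact hab.ne rfl
  · obtain ⟨δ, hδ, hle⟩ := exists_pos_eventually_le_of_isStationaryDist hp₀ hπ hB.reflTransGen i
    refine tendsto_atTop_mono' _ ?_ (hv.const_mul_atTop hδ)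
    filter_upwards [hle, hv.eventually_ge_atTop 0] with ε hle hv₀
    exact mul_le_mul_of_nonneg_right hle hv₀

end IsRenewalArray

end RenewalArray

/-- Lemma 4: under condition B, condition D₁ holds if and only if
`κ̃_ε(1)` converges in distribution to a nonnegative random variable `θ₀` with law not
concentrated at zero; in that case `E e^{−sθ₀} = e^{−A(s)}` and the processes `κ̃_ε(·)`
converge in finite-dimensional distributions to a nonnegative Lévy process with
Laplace transforms `e^{−tA(s)}`. -/
theorem stmt11 {m : ℕ} (hm : 0 < m) (ε₀ : ℝ) (hε₀ : 0 < ε₀)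
    {Ω : Type} [MeasurableSpace Ω]
    (η : ℝ → ℕ → Ω → Fin m) (κ : ℝ → ℕ → Ω → ℝ)
    (Pstart : ℝ → Fin m → Measure Ω)
    (hprob : ∀ ε i, IsProbabilityMeasure (Pstart ε i))
    (hmeas : ∀ ε n, Measurable (η ε n) ∧ Measurable (κ ε n))
    (hκnn : ∀ ε n ω, 0 ≤ κ ε n ω)
    (Q : ℝ → Fin m → Fin m → ℝ → ℝ)
    (hMRP : ∀ ε ∈ Ioc (0:ℝ) ε₀, ∀ n : ℕ, ∀ I : ℕ → Fin m, ∀ T : ℕ → ℝ,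
      Pstart ε (I 0) {ω | ∀ k ≤ n, (η ε k ω = I k ∧ (1 ≤ k → κ ε k ω ≤ T k))}
        = ENNReal.ofReal (∏ k ∈ Finset.Icc 1 n, Q ε (I (k - 1)) (I k) (T k)))
    (p : ℝ → Fin m → Fin m → ℝ)
    (hp : ∀ ε ∈ Ioc (0:ℝ) ε₀, ∀ i j, p ε i j = (Pstart ε i {ω | η ε 1 ω = j}).toReal)
    (hB : CondB p)
    (π : ℝ → Fin m → ℝ)
    (hπ : ∀ᶠ ε in 𝓝[>] (0:ℝ), IsStationaryDist (fun i j => p ε i j) (π ε))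
    -- arbitrary family of initial distributions
    (q : ℝ → Fin m → ℝ) (Pq : ℝ → Measure Ω)
    (hq : ∀ ε ∈ Ioc (0:ℝ) ε₀, (∀ i, 0 ≤ q ε i) ∧ ∑ i, q ε i = 1)
    (hmix : ∀ ε ∈ Ioc (0:ℝ) ε₀, Pq ε = ∑ i, ENNReal.ofReal (q ε i) • Pstart ε i)
    (v : ℝ → ℝ) (hvpos : ∀ ε ∈ Ioc (0:ℝ) ε₀, 0 < v ε)
    (hvinf : Tendsto v (𝓝[>] (0:ℝ)) atTop) :
    -- condition D₁ holds iff κ̃_ε(1) converges in distribution to a nonnegative limit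
    -- not concentrated at zero
    ((∃ A : ℝ → ℝ,
        (∀ s > 0, Tendsto (fun ε => v ε * (1 - lapPhi Pstart κ π ε s))
          (𝓝[>] (0:ℝ)) (𝓝 (A s))) ∧
        (∀ s > 0, 0 < A s) ∧ Tendsto A (𝓝[>] (0:ℝ)) (𝓝 0)) ↔
      (∃ μ : Measure ℝ, IsProbabilityMeasure μ ∧ μ (Iio 0) = 0 ∧ μ {0} < 1 ∧
        ∀ s > 0, Tendsto (fun ε => ∫ ω, Real.exp (-(s * kTil η κ π v ε 1 ω)) ∂(Pq ε))
          (𝓝[>] (0:ℝ)) (𝓝 (∫ x, Real.exp (-(s * x)) ∂μ)))) ∧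
    -- in this case the limit has Laplace transform e^{−A(s)}, and the processes κ̃_ε(·)
    -- converge in finite-dimensional distributions to the Lévy process θ₀(·)
    ∀ A : ℝ → ℝ,
      (∀ s > 0, Tendsto (fun ε => v ε * (1 - lapPhi Pstart κ π ε s))
        (𝓝[>] (0:ℝ)) (𝓝 (A s))) →
      (∀ s > 0, 0 < A s) → Tendsto A (𝓝[>] (0:ℝ)) (𝓝 0) → A 0 = 0 →
      (∀ s > 0, Tendsto (fun ε => ∫ ω, Real.exp (-(s * kTil η κ π v ε 1 ω)) ∂(Pq ε))
        (𝓝[>] (0:ℝ)) (𝓝 (Real.exp (-(A s))))) ∧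
      (∀ n : ℕ, ∀ t : ℕ → ℝ, t 0 = 0 → (∀ r < n, t r ≤ t (r + 1)) →
        ∀ s : ℕ → ℝ, (∀ r, 0 ≤ s r) →
        Tendsto
          (fun ε => ∫ ω, Real.exp (-(∑ r ∈ Finset.Icc 1 n,
            s r * (kTil η κ π v ε (t r) ω - kTil η κ π v ε (t (r - 1)) ω))) ∂(Pq ε))
          (𝓝[>] (0:ℝ))
          (𝓝 (Real.exp (-(∑ r ∈ Finset.Icc 1 n, A (s r) * (t r - t (r - 1))))))) := by
  have hIoc : ∀ᶠ ε in 𝓝[>] (0 : ℝ), ε ∈ Ioc 0 ε₀ := Ioc_mem_nhdsGT hε₀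
  have hM : ∀ᶠ ε in 𝓝[>] 0, IsMarkovRenewal (Pstart ε) (η ε) (κ ε) := hIoc.mono fun ε hε =>
    .of_semiMarkovKernel_Icc (hprob ε) (fun n => (hmeas ε n).1) (fun n => (hmeas ε n).2) (hκnn ε)
      (hMRP ε hε)
  have H : IsRenewalArray (𝓝[>] 0) Pstart η κ π v Pq :=
    .of_condB hM (hIoc.mono hp) hB hπ hvinf <| hIoc.mono fun ε hε =>
      ⟨q ε, (hq ε hε).1, (hq ε hε).2, hmix ε hε⟩
  simp only [integral_exp_neg_mul_eq_mgf]
  refine ⟨⟨?_, ?_⟩, fun A hA _ _ hA₀ => ⟨fun s hs => ?_, fun n t ht₀ ht s hs => ?_⟩⟩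
  · rintro ⟨A, hA, hA_pos, hA_zero⟩
    exact H.exists_tendsto_mgf_kTil_one hA hA_pos hA_zero
  · rintro ⟨μ, hμ, hμ₀, hμ₁, h⟩
    exact H.exists_tendsto_mul_one_sub_lapPhi hμ₀ hμ₁ h
  · exact H.tendsto_mgf_kTil_one hs.le (hA s hs)
  · simpa only [sum_Icc_one_eq_sum_range, Nat.add_sub_cancel] using
      H.tendsto_integral_exp_neg_sum_kTil_increments ht₀ ht (fun r => hs (r + 1))
        fun r => H.tendsto_mul_one_sub_lapPhi_of_nonneg hA hA₀ (hs (r + 1))
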